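/- arXiv:1805.07430 — 9 statements merged into one kernel-verified Lean document; each statement's English description precedes it below -/
import Mathlib

section
/- There is an absolute constant C > 0 (independent of N, T, η, β, u and the reward vectors) such that the following holds. Let the BARRONS iterates x_1, …, x_T be as in the context with parameters 0 < β ≤ 1/2 and 0 < η ≤ 1. For any u ∈ Δ̄_N, if β ≤ α_T(u) where α_t(u) = min{1/2, min_{s∈[t]} 1/(8·|⟨∇_s, u − x_s⟩|)}, then Reg(u) = Σ_{t=1}^T f_t(x_t) − Σ_{t=1}^T f_t(u) ≤ C·N·ln T/η + 8·N·ln T/β − (1/(8·η·ln T))·Σ_{i=1}^N max_{t∈[T]} u_i/x_{t,i}. -/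
open Matrix

/-- The logarithm at `1 + z` lies below a parabola whose curvature adapts to the size of `z`. -/
theorem log_one_add_le_sub_sq {β z : ℝ} (hβ0 : 0 < β) (hβ : β ≤ 1 / 2) (hz : -1 < z)
    (hβz : 8 * β * |z| ≤ 1) : Real.log (1 + z) ≤ z - β / 2 * z ^ 2 := by
  have hpos : 0 < 1 + z := by linarith
  rcases le_total z (1 / 2) with hz2 | hz2
  · have hmain : Real.log (1 + z) ≤ z - z ^ 2 / 4 := by
      set q := Real.sqrt (Real.sqrt (1 + z)) with hq
      have hq0 : 0 < q := by positivity
      have hq4 : q ^ 4 = 1 + z := by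
        rw [show q ^ 4 = (q ^ 2) ^ 2 by ring, hq, Real.sq_sqrt (by positivity),
          Real.sq_sqrt hpos.le]
      have hlog : Real.log (1 + z) = 4 * Real.log q := by
        rw [← hq4, Real.log_pow]; norm_num
      have h1 := Real.log_le_sub_one_of_pos hq0
      have hq1 : q ≤ 1.12 := by
        by_contra! h
        have : (1.12 : ℝ) ^ 4 < q ^ 4 := by gcongr
        norm_num at this
        linarith
      have hz' : z = q ^ 4 - 1 := by linarith
      have h3 : ((q + 1) * (q ^ 2 + 1)) ^ 2 ≤ 4 * (q ^ 2 + 2 * q + 3) := by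
        have e1 : (q + 1) * (q ^ 2 + 1) ≤ 2.12 * (q ^ 2 + 1) := by gcongr; linarith
        have e2 : (q + 1) * (q ^ 2 + 1) ≤ (q + 1) * 2.2544 := by gcongr; nlinarith
        have e3 : ((q + 1) * (q ^ 2 + 1)) ^ 2 ≤ (2.12 * (q ^ 2 + 1)) * ((q + 1) * 2.2544) := by
          rw [sq]; gcongr
        nlinarith [mul_nonneg hq0.le (sub_nonneg.2 hq1), mul_nonneg (sq_nonneg q) (sub_nonneg.2 hq1)]
      rw [hlog, hz']
      nlinarith [mul_nonneg (sq_nonneg (q - 1)) (sub_nonneg.2 h3)]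
    nlinarith [sq_nonneg z]
  · rw [abs_of_nonneg (by linarith)] at hβz
    have h15 : Real.log (1.5 : ℝ) ≤ 0.46875 := by
      rw [Real.log_le_iff_le_exp (by norm_num)]
      have := Real.quadratic_le_exp_of_nonneg (x := 0.46875) (by norm_num)
      norm_num at this ⊢
      linarith
    have h1 : Real.log (1 + z) = Real.log 1.5 + Real.log ((1 + z) / 1.5) := by
      rw [← Real.log_mul (by norm_num) (by positivity)]; congr 1; field_simp
    have h2 := Real.log_le_sub_one_of_pos (show 0 < (1 + z) / 1.5 by positivity)
    rw [h1]
    have h3 : (1 + z) / 1.5 = (1 + z) * (2 / 3) := by norm_num; ring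
    nlinarith

/-- One step of the log-barrier potential argument, for a single coordinate. -/
theorem barrier_coordinate_step {η L m m' a y : ℝ} (hη : 0 < η) (hL : 1 ≤ L) (hmm : m ≤ m')
    (hm' : m' ≤ 1) (hy : 0 < y) (hyL : Real.log y ≤ 2 * L)
    (h : m' = m ∨ y = a * Real.exp (L * m')) :
    1 / (η * Real.exp m') * (y - 1 - Real.log y) ≤
      1 / (η * Real.exp m) * (y - 1 - Real.log y)
        - 1 / (8 * η * L) * (a * Real.exp (L * m') - a * Real.exp (L * m))
        + (1 + 2 * L) * (1 / (η * Real.exp m) - 1 / (η * Real.exp m')) := by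
  rcases h with rfl | h
  · simp
  · have hδ : (m' - m) / 3 ≤ Real.exp (-m) - Real.exp (-m') := by
      have h1 : Real.exp (-m) = Real.exp (-m') * Real.exp (m' - m) := by
        rw [← Real.exp_add]; ring_nf
      have h2 := Real.add_one_le_exp (m' - m)
      have h3 : 1 / 3 ≤ Real.exp (-m') := by
        rw [Real.exp_neg, one_div]
        have : Real.exp m' ≤ Real.exp 1 := Real.exp_le_exp.2 hm'
        gcongr
        linarith [Real.exp_one_lt_three]
      rw [h1]
      nlinarith
    have hρ : a * Real.exp (L * m') - a * Real.exp (L * m) ≤ y * (L * (m' - m)) := by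
      have h1 : Real.exp (L * m) = Real.exp (L * m') * Real.exp (-(L * (m' - m))) := by
        rw [← Real.exp_add]; ring_nf
      have h2 := Real.add_one_le_exp (-(L * (m' - m)))
      rw [h1, ← mul_assoc, ← h]
      nlinarith
    have hkey : 1 / (8 * L) * (a * Real.exp (L * m') - a * Real.exp (L * m)) ≤
        (Real.exp (-m) - Real.exp (-m')) * y := by
      calc 1 / (8 * L) * (a * Real.exp (L * m') - a * Real.exp (L * m))
          ≤ 1 / (8 * L) * (y * (L * (m' - m))) := by gcongr
        _ = (m' - m) / 8 * y := by field_simp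
        _ ≤ (Real.exp (-m) - Real.exp (-m')) * y := by gcongr; linarith
    have hδ0 : 0 ≤ Real.exp (-m) - Real.exp (-m') := by linarith
    have e : ∀ k : ℝ, 1 / (η * Real.exp k) = 1 / η * Real.exp (-k) := by
      intro k; rw [Real.exp_neg]; field_simp
    rw [e, e, show 1 / (8 * η * L) = 1 / η * (1 / (8 * L)) by field_simp]
    have : 0 ≤ 1 / η * ((Real.exp (-m) - Real.exp (-m')) * (y - 1 - Real.log y + (1 + 2 * L))
        - 1 / (8 * L) * (a * Real.exp (L * m') - a * Real.exp (L * m))) := by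
      refine mul_nonneg (by positivity) ?_
      nlinarith [mul_nonneg hδ0 (sub_nonneg.2 hyL)]
    linarith

theorem le_biSup_finset {α : Type*} {s : Finset α} (f : α → ℝ) {a : α} (ha : a ∈ s) :
    f a ≤ ⨆ b ∈ s, f b := by
  have hb : BddAbove (Set.range fun b => ⨆ _ : b ∈ s, f b) := by
    refine ((s.finite_toSet.image f).union (Set.finite_singleton 0)).bddAbove.mono ?_
    rintro _ ⟨b, rfl⟩
    by_cases hb : b ∈ s
    · left; exact ⟨b, hb, by simp [hb]⟩
    · right; simp [hb]
  refine le_ciSup_of_le hb a ?_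
  simp [ha]

theorem biSup_finset_le {α : Type*} {s : Finset α} {f : α → ℝ} {c : ℝ} (hc : 0 ≤ c)
    (h : ∀ a ∈ s, f a ≤ c) : ⨆ b ∈ s, f b ≤ c :=
  Real.iSup_le (fun b => Real.iSup_le (fun hb => h b hb) hc) hc

/-- A linear term minus a quadratic form is controlled by the logarithmic growth of the
determinant under the corresponding rank-one update. -/
theorem sub_quadratic_le_log_det {n : Type*} [Fintype n] [DecidableEq n] {B : Matrix n n ℝ}
    (hB : B.PosDef) {β : ℝ} (hβ : 0 < β) (g d : n → ℝ) :
    g ⬝ᵥ d - β / 2 * (d ⬝ᵥ B *ᵥ d + (g ⬝ᵥ d) ^ 2) ≤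
      1 / (2 * β) * (Real.log (B + vecMulVec g g).det - Real.log B.det) := by
  have hdet := hB.det_pos
  have hunit : IsUnit B.det := hdet.ne'.isUnit
  set w := B⁻¹ *ᵥ g with hw
  have hBw : B *ᵥ w = g := by
    rw [hw, mulVec_mulVec, mul_nonsing_inv _ hunit, one_mulVec]
  set s := g ⬝ᵥ w with hs
  have hsymm : Bᵀ = B := by simpa using hB.isHermitian.eq
  have hs0 : 0 ≤ s := by
    have := hB.posSemidef.dotProduct_mulVec_nonneg w
    rw [hBw] at this
    simpa [hs, dotProduct_comm] using this
  have hdetup : (B + vecMulVec g g).det = B.det * (1 + s) := by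
    rw [vecMulVec_eq Unit, det_add_replicateCol_mul_replicateRow hunit,
      det_unique (n := Unit)]
    congr 1
    rw [Matrix.mul_assoc, ← replicateCol_mulVec]
    simp [hs, hw, Matrix.mul_apply, dotProduct]
  rw [hdetup, Real.log_mul hdet.ne' (by positivity), add_sub_cancel_left]
  have hlog : s / (1 + s) ≤ Real.log (1 + s) := by
    have := Real.one_sub_inv_le_log_of_pos (show 0 < 1 + s by positivity)
    have e : s / (1 + s) = 1 - (1 + s)⁻¹ := by field_simp; ring
    linarith
  set p := g ⬝ᵥ d with hp
  set c := 1 / (β * (1 + s)) with hc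
  have hquad : 0 ≤ d ⬝ᵥ B *ᵥ d - 2 * c * p + c ^ 2 * s := by
    have h := hB.posSemidef.dotProduct_mulVec_nonneg (d - c • w)
    have h2 : w ⬝ᵥ B *ᵥ d = p := by
      rw [dotProduct_mulVec, ← mulVec_transpose, hsymm, hBw]
    simp only [star_trivial, mulVec_sub, mulVec_smul, hBw, dotProduct_sub, sub_dotProduct,
      smul_dotProduct, dotProduct_smul, smul_eq_mul, h2] at h
    rw [dotProduct_comm d g, dotProduct_comm w g] at h
    linarith
  have hsq : 0 ≤ β / 2 * (p - s * c) ^ 2 := by positivity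
  have hcs : β * c * (1 + s) = 1 := by rw [hc]; field_simp
  have hlog' : 1 / (2 * β) * (s / (1 + s)) ≤ 1 / (2 * β) * Real.log (1 + s) := by gcongr
  have hsc : 1 / (2 * β) * (s / (1 + s)) = β / 2 * c ^ 2 * s * (1 + s) := by
    rw [hc]; field_simp
  have hq2 : 0 ≤ β / 2 * (d ⬝ᵥ B *ᵥ d - 2 * c * p + c ^ 2 * s) := by positivity
  have hcp : p = β * c * (1 + s) * p := by rw [hcs, one_mul]
  nlinarith

/-- The determinant of a positive semidefinite matrix is at most its trace to the power of
the dimension. -/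
theorem det_le_trace_pow {n : Type*} [Fintype n] [DecidableEq n] {B : Matrix n n ℝ}
    (hB : B.PosSemidef) : B.det ≤ B.trace ^ Fintype.card n := by
  have hdet := hB.isHermitian.det_eq_prod_eigenvalues
  have htr := hB.isHermitian.trace_eq_sum_eigenvalues
  simp only [RCLike.ofReal_real_eq_id, id] at hdet htr
  rw [hdet, htr, ← Finset.card_univ]
  rw [← Finset.prod_const]
  refine Finset.prod_le_prod (fun i _ => hB.eigenvalues_nonneg i) fun i _ => ?_
  exact Finset.single_le_sum (f := hB.isHermitian.eigenvalues)
    (fun j _ => hB.eigenvalues_nonneg j) (Finset.mem_univ i)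

/-- The Bregman divergence of `p ↦ β / 2 * pᵀ A p + ∑ i, c i * log (1 / p i)`. -/
noncomputable def barrierDiv {n : Type*} [Fintype n] (β : ℝ) (A : Matrix n n ℝ) (c p q : n → ℝ) :
    ℝ :=
  β / 2 * ((p - q) ⬝ᵥ A *ᵥ (p - q)) + ∑ i, c i * (p i / q i - 1 - Real.log (p i / q i))

section barrierDiv

variable {n : Type*} [Fintype n] {β : ℝ} {A : Matrix n n ℝ} {c : n → ℝ}

theorem dotProduct_mulVec_comm_of_transpose_eq (hA : Aᵀ = A) (v w : n → ℝ) :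
    v ⬝ᵥ A *ᵥ w = w ⬝ᵥ A *ᵥ v := by
  rw [dotProduct_mulVec, ← mulVec_transpose, hA, dotProduct_comm]

theorem div_sub_one_sub_log_nonneg {a b : ℝ} (ha : 0 < a) (hb : 0 < b) :
    0 ≤ a / b - 1 - Real.log (a / b) := by
  linarith [Real.log_le_sub_one_of_pos (div_pos ha hb)]

theorem quadratic_le_barrierDiv (hc : ∀ i, 0 ≤ c i) {p q : n → ℝ} (hp : ∀ i, 0 < p i)
    (hq : ∀ i, 0 < q i) : β / 2 * ((p - q) ⬝ᵥ A *ᵥ (p - q)) ≤ barrierDiv β A c p q :=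
  le_add_of_nonneg_right <| Finset.sum_nonneg fun i _ =>
    mul_nonneg (hc i) (div_sub_one_sub_log_nonneg (hp i) (hq i))

theorem barrierDiv_nonneg (hβ : 0 ≤ β) (hA : A.PosSemidef) (hc : ∀ i, 0 ≤ c i) {p q : n → ℝ}
    (hp : ∀ i, 0 < p i) (hq : ∀ i, 0 < q i) : 0 ≤ barrierDiv β A c p q := by
  refine le_trans ?_ (quadratic_le_barrierDiv hc hp hq)
  have := hA.dotProduct_mulVec_nonneg (p - q)
  rw [star_trivial] at this
  positivity

theorem bregman_eq_barrierDiv (hA : Aᵀ = A) {p q : n → ℝ} (hp : ∀ i, 0 < p i)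
    (hq : ∀ i, 0 < q i) :
    (β / 2 * ∑ i, ∑ j, p i * A i j * p j + ∑ i, c i * Real.log (1 / p i))
      - (β / 2 * ∑ i, ∑ j, q i * A i j * q j + ∑ i, c i * Real.log (1 / q i))
      - ∑ i, (β * (∑ j, A i j * q j) - c i * (1 / q i)) * (p i - q i)
      = barrierDiv β A c p q := by
  have e : ∀ v : n → ℝ, ∑ i, ∑ j, v i * A i j * v j = v ⬝ᵥ A *ᵥ v := by
    intro v
    simp [dotProduct, mulVec, Finset.mul_sum, mul_assoc]
  have e2 : ∑ i, (β * (∑ j, A i j * q j) - c i * (1 / q i)) * (p i - q i)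
      = β * ((p - q) ⬝ᵥ A *ᵥ q) - ∑ i, c i * (1 / q i) * (p i - q i) := by
    rw [dotProduct, Finset.mul_sum, ← Finset.sum_sub_distrib]
    refine Finset.sum_congr rfl fun i _ => ?_
    simp only [mulVec, dotProduct, Pi.sub_apply]
    ring
  have e3 : ∑ i, c i * (p i / q i - 1 - Real.log (p i / q i)) =
      ∑ i, c i * Real.log (1 / p i) - ∑ i, c i * Real.log (1 / q i)
        + ∑ i, c i * (1 / q i) * (p i - q i) := by
    rw [← Finset.sum_sub_distrib, ← Finset.sum_add_distrib]
    refine Finset.sum_congr rfl fun i _ => ?_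
    have := (hq i).ne'
    rw [Real.log_div (hp i).ne' this, one_div, one_div, Real.log_inv, Real.log_inv]
    field_simp
    ring
  rw [e, e, e2, barrierDiv, e3]
  simp only [mulVec_sub, dotProduct_sub, sub_dotProduct]
  rw [dotProduct_mulVec_comm_of_transpose_eq hA q p]
  ring

theorem barrierDiv_three_point (hA : Aᵀ = A) {y z w : n → ℝ} (hy : ∀ i, 0 < y i)
    (hz : ∀ i, 0 < z i) (hw : ∀ i, 0 < w i) :
    barrierDiv β A c y w = barrierDiv β A c y z + barrierDiv β A c z w
      + (β • (A *ᵥ (z - w)) + fun i => c i * (1 / w i - 1 / z i)) ⬝ᵥ (y - z) := by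
  have e : ∑ i, c i * (y i / w i - 1 - Real.log (y i / w i)) =
      ∑ i, c i * (y i / z i - 1 - Real.log (y i / z i))
      + ∑ i, c i * (z i / w i - 1 - Real.log (z i / w i))
      + (fun i => c i * (1 / w i - 1 / z i)) ⬝ᵥ (y - z) := by
    rw [dotProduct, ← Finset.sum_add_distrib, ← Finset.sum_add_distrib]
    refine Finset.sum_congr rfl fun i _ => ?_
    have h1 := (hw i).ne'
    have h2 := (hz i).ne'
    rw [Real.log_div (hy i).ne' h1, Real.log_div (hy i).ne' h2, Real.log_div h2 h1, Pi.sub_apply]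
    field_simp
    ring
  have h : (y - w) ⬝ᵥ A *ᵥ (y - w) = (y - z) ⬝ᵥ A *ᵥ (y - z) + (z - w) ⬝ᵥ A *ᵥ (z - w)
      + 2 * ((A *ᵥ (z - w)) ⬝ᵥ (y - z)) := by
    rw [show y - w = (y - z) + (z - w) by abel, mulVec_add, dotProduct_add, add_dotProduct,
      add_dotProduct, dotProduct_mulVec_comm_of_transpose_eq hA (z - w) (y - z),
      dotProduct_comm (A *ᵥ (z - w))]
    ring
  rw [barrierDiv, barrierDiv, barrierDiv, e, h, add_dotProduct, smul_dotProduct, smul_eq_mul]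
  ring

theorem barrierDiv_add_smul_le (hc : ∀ i, 0 ≤ c i) {u z : n → ℝ} (hu : ∀ i, 0 < u i)
    (hz : ∀ i, 0 < z i) {l : ℝ} (hl : 0 < l) (hl2 : l ≤ 1 / 2) :
    barrierDiv β A c (z + l • (u - z)) z ≤
      l ^ 2 * (β / 2 * ((u - z) ⬝ᵥ A *ᵥ (u - z)) + ∑ i, c i * (2 * (u i / z i - 1) ^ 2)) := by
  rw [barrierDiv, add_sub_cancel_left, mulVec_smul, dotProduct_smul, smul_dotProduct, mul_add,
    Finset.mul_sum]
  refine add_le_add (le_of_eq (by simp only [smul_eq_mul]; ring)) ?_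
  refine Finset.sum_le_sum fun i _ => ?_
  rw [show l ^ 2 * (c i * (2 * (u i / z i - 1) ^ 2)) = c i * (2 * (l * (u i / z i - 1)) ^ 2) by ring]
  refine mul_le_mul_of_nonneg_left ?_ (hc i)
  have hzi := hz i
  have e1 : (z + l • (u - z)) i / z i = 1 + l * (u i / z i - 1) := by
    simp only [Pi.add_apply, Pi.smul_apply, Pi.sub_apply, smul_eq_mul]
    field_simp
  rw [e1]
  set e := l * (u i / z i - 1) with he
  have hratio : 0 < u i / z i := div_pos (hu i) hzi
  have he2 : 1 / 2 ≤ 1 + e := by nlinarith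
  have h := Real.one_sub_inv_le_log_of_pos (show 0 < 1 + e by linarith)
  have h2 : e - (1 - (1 + e)⁻¹) ≤ 2 * e ^ 2 := by
    have h3 : e - (1 - (1 + e)⁻¹) = e ^ 2 * (1 + e)⁻¹ := by
      have : 1 + e ≠ 0 := by linarith
      field_simp
      ring
    have h4 : (1 + e)⁻¹ ≤ 2 := by
      rw [inv_le_comm₀ (by linarith) (by norm_num)]; linarith
    rw [h3]
    nlinarith [sq_nonneg e]
  linarith

/-- The mirror descent inequality for a minimizer over a convex set of positive vectors. -/
theorem mirror_step_le (hA : Aᵀ = A) (hc : ∀ i, 0 ≤ c i) {K : Set (n → ℝ)} (hK : Convex ℝ K)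
    (hKpos : ∀ y ∈ K, ∀ i, 0 < y i) {g w z u : n → ℝ} (hw : w ∈ K) (hz : z ∈ K) (hu : u ∈ K)
    (hmin : ∀ y ∈ K, z ⬝ᵥ g + barrierDiv β A c z w ≤ y ⬝ᵥ g + barrierDiv β A c y w) :
    g ⬝ᵥ (z - u) ≤ barrierDiv β A c u w - barrierDiv β A c u z - barrierDiv β A c z w := by
  have hup := hKpos u hu
  have hzp := hKpos z hz
  have hwp := hKpos w hw
  set lin : n → ℝ := β • (A *ᵥ (z - w)) + fun i => c i * (1 / w i - 1 / z i) with hlin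
  set R := β / 2 * ((u - z) ⬝ᵥ A *ᵥ (u - z)) + ∑ i, c i * (2 * (u i / z i - 1) ^ 2) with hR
  have key : ∀ l : ℝ, 0 < l → l ≤ 1 / 2 → 0 ≤ g ⬝ᵥ (u - z) + lin ⬝ᵥ (u - z) + l * R := by
    intro l hl hl2
    have hy : z + l • (u - z) ∈ K := hK.add_smul_sub_mem hz hu ⟨hl.le, by linarith⟩
    have h1 := hmin _ hy
    rw [barrierDiv_three_point hA (hKpos _ hy) hzp hwp, add_sub_cancel_left, dotProduct_smul,
      add_dotProduct, smul_dotProduct, smul_eq_mul, smul_eq_mul, dotProduct_comm (u - z) g] at h1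
    have h2 := barrierDiv_add_smul_le (β := β) (A := A) hc hup hzp hl hl2
    rw [← hlin] at h1
    rw [← hR] at h2
    have h3 : 0 ≤ l * (g ⬝ᵥ (u - z) + lin ⬝ᵥ (u - z) + l * R) := by
      linarith
    exact nonneg_of_mul_nonneg_right h3 hl
  have hnonneg : 0 ≤ g ⬝ᵥ (u - z) + lin ⬝ᵥ (u - z) := by
    by_contra! hneg
    set G := g ⬝ᵥ (u - z) + lin ⬝ᵥ (u - z)
    have h1 := key (min (1 / 2) (-G / (2 * (|R| + 1)))) (lt_min (by norm_num)
      (div_pos (by linarith) (by positivity))) (min_le_left _ _)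
    set l := min (1 / 2) (-G / (2 * (|R| + 1))) with hl
    have hl0 : 0 < l := lt_min (by norm_num) (div_pos (by linarith) (by positivity))
    have h2 : l * (2 * (|R| + 1)) ≤ -G := by
      rw [← le_div_iff₀ (by positivity)]; exact min_le_right _ _
    nlinarith [le_abs_self R]
  have h3 := barrierDiv_three_point (β := β) (c := c) hA hup hzp hwp
  have h4 : g ⬝ᵥ (z - u) = - (g ⬝ᵥ (u - z)) := by rw [← dotProduct_neg, neg_sub]
  linarith

/-- The mirror descent inequality for a rank-one update of the quadratic part, with the stability
term bounded by the growth of the log-determinant. -/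
theorem mirror_step_rank_one_le [DecidableEq n] (hβ : 0 < β) {g w z u : n → ℝ} (hA : A.PosDef)
    (hc : ∀ i, 0 ≤ c i) {K : Set (n → ℝ)} (hK : Convex ℝ K) (hKpos : ∀ y ∈ K, ∀ i, 0 < y i)
    (hw : w ∈ K) (hz : z ∈ K) (hu : u ∈ K)
    (hmin : ∀ y ∈ K, z ⬝ᵥ g + barrierDiv β (A + vecMulVec g g) c z w ≤
      y ⬝ᵥ g + barrierDiv β (A + vecMulVec g g) c y w) :
    g ⬝ᵥ (w - u) - β / 2 * (g ⬝ᵥ (w - u)) ^ 2 ≤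
      barrierDiv β A c u w - barrierDiv β (A + vecMulVec g g) c u z
        + 1 / (2 * β) * (Real.log (A + vecMulVec g g).det - Real.log A.det) := by
  have hAt : Aᵀ = A := by simpa using hA.isHermitian.eq
  have hsymm : (A + vecMulVec g g)ᵀ = A + vecMulVec g g := by
    rw [transpose_add, hAt, transpose_vecMulVec]
  have hquad : ∀ v : n → ℝ, v ⬝ᵥ (A + vecMulVec g g) *ᵥ v = v ⬝ᵥ A *ᵥ v + (g ⬝ᵥ v) ^ 2 := by
    intro v
    rw [add_mulVec, dotProduct_add, vecMulVec_mulVec]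
    simp [dotProduct_comm v g, sq]
  have h1 := mirror_step_le hsymm hc hK hKpos hw hz hu hmin
  have h2 := quadratic_le_barrierDiv (β := β) (A := A + vecMulVec g g) hc (hKpos z hz) (hKpos w hw)
  have h3 := sub_quadratic_le_log_det hA hβ g (w - z)
  have h4 : (z - w) ⬝ᵥ (A + vecMulVec g g) *ᵥ (z - w)
      = (w - z) ⬝ᵥ A *ᵥ (w - z) + (g ⬝ᵥ (w - z)) ^ 2 := by
    rw [← hquad, ← neg_sub w z, mulVec_neg, neg_dotProduct_neg]
  have h5 : barrierDiv β (A + vecMulVec g g) c u w =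
      barrierDiv β A c u w + β / 2 * (g ⬝ᵥ (w - u)) ^ 2 := by
    rw [barrierDiv, barrierDiv, hquad, ← neg_sub w u, dotProduct_neg]
    ring
  have h6 : g ⬝ᵥ (w - u) = g ⬝ᵥ (w - z) + g ⬝ᵥ (z - u) := by
    rw [← dotProduct_add, sub_add_sub_cancel]
  rw [h4] at h2
  linarith

end barrierDiv

theorem biSup_Icc_one_one {f : ℕ → ℝ} (hf : f 1 = 0) : ⨆ s ∈ Finset.Icc 1 1, f s = 0 := by
  refine le_antisymm (biSup_finset_le le_rfl ?_) (hf.symm.le.trans (le_biSup_finset f (by simp)))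
  intro a ha
  simp only [Finset.Icc_self, Finset.mem_singleton] at ha
  rw [ha, hf]

theorem biSup_Icc_nonneg {f : ℕ → ℝ} (hf : f 1 = 0) {t : ℕ} (ht : 1 ≤ t) :
    0 ≤ ⨆ s ∈ Finset.Icc 1 t, f s :=
  hf.symm.le.trans (le_biSup_finset f (by simpa using ht))

theorem biSup_Icc_succ {f : ℕ → ℝ} (hf : f 1 = 0) {t : ℕ} (ht : 1 ≤ t) :
    ⨆ s ∈ Finset.Icc 1 (t + 1), f s = max (⨆ s ∈ Finset.Icc 1 t, f s) (f (t + 1)) := by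
  refine le_antisymm (biSup_finset_le (le_max_of_le_left (biSup_Icc_nonneg hf ht)) ?_)
    (max_le (biSup_finset_le (biSup_Icc_nonneg hf (by omega)) ?_) (le_biSup_finset f (by simp)))
  · intro a ha
    rw [Finset.mem_Icc] at ha
    rcases eq_or_lt_of_le ha.2 with rfl | h
    · exact le_max_right _ _
    · exact le_max_of_le_left (le_biSup_finset f (by simp only [Finset.mem_Icc]; omega))
  · intro a ha
    rw [Finset.mem_Icc] at ha
    exact le_biSup_finset f (by simp only [Finset.mem_Icc]; omega)

/- STATEMENT 0: Theorem 1 of the paper (main regret bound for BARRONS), with an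
   absolute constant C independent of all parameters. -/

theorem barrons_regret_bound :
    ∃ C : ℝ, 0 < C ∧
    ∀ (N T : ℕ) (_hN : 2 ≤ N) (_hT : N < T)
      (β η : ℝ) (_hβ0 : 0 < β) (_hβ : β ≤ 1 / 2) (_hη0 : 0 < η) (_hη : η ≤ 1)
      -- reward vectors: nonnegative with maximum coordinate equal to 1
      (r : ℕ → Fin N → ℝ)
      (_hr : ∀ t ∈ Finset.Icc 1 T, (∀ i, 0 ≤ r t i) ∧ (∃ i, r t i = 1) ∧ ∀ i, r t i ≤ 1)
      -- the iterates x_1, ..., x_{T+1}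
      (x : ℕ → Fin N → ℝ)
      (_hx1 : ∀ i, x 1 i = 1 / N)
      (_hxmem : ∀ t ∈ Finset.Icc 1 (T + 1),
          (∀ i, 0 ≤ x t i) ∧ (∑ i, x t i) = 1 ∧ ∀ i, 1 / ((N : ℝ) * T) ≤ x t i)
      -- the gradients ∇_t = -r_t / ⟨x_t, r_t⟩
      (grad : ℕ → Fin N → ℝ)
      (_hgrad : ∀ t i, grad t i = -(r t i) / ∑ j, x t j * r t j)
      -- the matrices A_t
      (A : ℕ → Matrix (Fin N) (Fin N) ℝ)
      (_hA0 : A 0 = (N : ℝ) • (1 : Matrix (Fin N) (Fin N) ℝ))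
      (_hA : ∀ t ∈ Finset.Icc 1 T, ∀ i j, A t i j = A (t - 1) i j + grad t i * grad t j)
      -- the individual learning rates η_{t,i}
      (eta : ℕ → Fin N → ℝ)
      (_heta : ∀ t ∈ Finset.Icc 1 T, ∀ i,
          eta t i = η * Real.exp (⨆ s ∈ Finset.Icc 1 t,
            Real.log (1 / ((N : ℝ) * x s i)) / Real.log T))
      -- the regularizer ψ_t, its gradient, and its Bregman divergence
      (psi : ℕ → (Fin N → ℝ) → ℝ)
      (_hpsi : ∀ t p, psi t p =
          β / 2 * ∑ i, ∑ j, p i * A t i j * p j + ∑ i, (1 / eta t i) * Real.log (1 / p i))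
      (gpsi : ℕ → (Fin N → ℝ) → Fin N → ℝ)
      (_hgpsi : ∀ t p i, gpsi t p i = β * (∑ j, A t i j * p j) - (1 / eta t i) * (1 / p i))
      (D : ℕ → (Fin N → ℝ) → (Fin N → ℝ) → ℝ)
      (_hD : ∀ t p q, D t p q = psi t p - psi t q - ∑ i, gpsi t q i * (p i - q i))
      -- x_{t+1} minimizes ⟨x, ∇_t⟩ + D_{ψ_t}(x, x_t) over Δ̄_N
      (_hmin : ∀ t ∈ Finset.Icc 1 T, ∀ y : Fin N → ℝ,
          ((∀ i, 0 ≤ y i) ∧ (∑ i, y i) = 1 ∧ ∀ i, 1 / ((N : ℝ) * T) ≤ y i) →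
          (∑ i, x (t + 1) i * grad t i) + D t (x (t + 1)) (x t)
            ≤ (∑ i, y i * grad t i) + D t y (x t))
      -- the comparator u ∈ Δ̄_N
      (u : Fin N → ℝ)
      (_hu : (∀ i, 0 ≤ u i) ∧ (∑ i, u i) = 1 ∧ ∀ i, 1 / ((N : ℝ) * T) ≤ u i)
      -- β ≤ α_T(u), i.e. β ≤ 1/2 (above) and β ≤ 1/(8|⟨∇_s, u - x_s⟩|) for all s ∈ [T]
      (_halpha : ∀ s ∈ Finset.Icc 1 T, 8 * β * |∑ i, grad s i * (u i - x s i)| ≤ 1),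
      (∑ t ∈ Finset.Icc 1 T, -Real.log (∑ i, x t i * r t i))
        - ∑ t ∈ Finset.Icc 1 T, -Real.log (∑ i, u i * r t i)
      ≤ C * N * Real.log T / η + 8 * N * Real.log T / β
        - (1 / (8 * η * Real.log T)) * ∑ i, ⨆ t ∈ Finset.Icc 1 T, u i / x t i := by
  refine ⟨10, by norm_num, ?_⟩
  intro N T hN hT β η hβ0 hβ hη0 hη r hr x hx1 hxmem grad hgrad A hA0 hA eta heta psi hpsi gpsi
    hgpsi D hD hmin u hu halpha
  have hN0 : (0 : ℝ) < N := by exact_mod_cast (by omega : 0 < N)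
  have hT0 : (0 : ℝ) < T := by exact_mod_cast (by omega : 0 < T)
  have hN1 : (1 : ℝ) ≤ N := by exact_mod_cast (by omega : 1 ≤ N)
  have hNT : (N : ℝ) + 1 ≤ T := by exact_mod_cast hT
  have hNTpos : (0 : ℝ) < 1 / ((N : ℝ) * T) := by positivity
  set L := Real.log T with hLdef
  have hL : 1 ≤ L := by
    rw [hLdef, Real.le_log_iff_exp_le hT0]
    have : (3 : ℝ) ≤ T := by exact_mod_cast (by omega : 3 ≤ T)
    linarith [Real.exp_one_lt_three]
  have hL0 : 0 < L := by linarith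
  let K : Set (Fin N → ℝ) :=
    {y | (∀ i, 0 ≤ y i) ∧ (∑ i, y i) = 1 ∧ ∀ i, 1 / ((N : ℝ) * T) ≤ y i}
  have hK : Convex ℝ K := by
    rintro y ⟨hy1, hy2, hy3⟩ z ⟨hz1, hz2, hz3⟩ a b ha hb hab
    refine ⟨fun i => ?_, ?_, fun i => ?_⟩
    · have h1 := hy1 i
      have h2 := hz1 i
      simp only [Pi.add_apply, Pi.smul_apply, smul_eq_mul]
      positivity
    · simp only [Pi.add_apply, Pi.smul_apply, smul_eq_mul, Finset.sum_add_distrib,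
        ← Finset.mul_sum, hy2, hz2, mul_one, hab]
    · simp only [Pi.add_apply, Pi.smul_apply, smul_eq_mul]
      calc 1 / ((N : ℝ) * T) = a * (1 / ((N : ℝ) * T)) + b * (1 / ((N : ℝ) * T)) := by
            rw [← add_mul, hab, one_mul]
        _ ≤ a * y i + b * z i :=
            add_le_add (mul_le_mul_of_nonneg_left (hy3 i) ha) (mul_le_mul_of_nonneg_left (hz3 i) hb)
  have hKpos : ∀ y ∈ K, ∀ i, 0 < y i := fun y hy i => hNTpos.trans_le (hy.2.2 i)
  have huK : u ∈ K := hu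
  have hxK : ∀ t, 1 ≤ t → t ≤ T + 1 → x t ∈ K := fun t h1 h2 => hxmem t (Finset.mem_Icc.2 ⟨h1, h2⟩)
  have hinner : ∀ y ∈ K, ∀ t, 1 ≤ t → t ≤ T → 1 / ((N : ℝ) * T) ≤ ∑ i, y i * r t i := by
    intro y hy t h1 h2
    obtain ⟨hr0, ⟨k, hk⟩, -⟩ := hr t (Finset.mem_Icc.2 ⟨h1, h2⟩)
    calc 1 / ((N : ℝ) * T) ≤ y k * r t k := by rw [hk, mul_one]; exact hy.2.2 k
      _ ≤ _ := Finset.single_le_sum (f := fun i => y i * r t i)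
        (fun i _ => mul_nonneg (hy.1 i) (hr0 i)) (Finset.mem_univ k)
  -- the matrices
  have hAsucc : ∀ t, 1 ≤ t → t ≤ T → A t = A (t - 1) + vecMulVec (grad t) (grad t) := by
    intro t h1 h2
    ext i j
    rw [hA t (Finset.mem_Icc.2 ⟨h1, h2⟩), Matrix.add_apply, vecMulVec_apply]
  have hApos : ∀ t, t ≤ T → (A t).PosDef := by
    intro t
    induction t with
    | zero => intro _; rw [hA0]; exact PosDef.one.smul hN0
    | succ t ih =>
      intro ht
      rw [hAsucc (t + 1) (by omega) ht]
      have h := posSemidef_vecMulVec_self_star (grad (t + 1))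
      rw [star_trivial] at h
      exact (ih (by omega)).add_posSemidef h
  have hgradsq : ∀ t, 1 ≤ t → t ≤ T → grad t ⬝ᵥ grad t ≤ N * ((N : ℝ) * T) ^ 2 := by
    intro t h1 h2
    have hS := hinner (x t) (hxK t h1 (by omega)) t h1 h2
    obtain ⟨hr0, -, hr1⟩ := hr t (Finset.mem_Icc.2 ⟨h1, h2⟩)
    have hb : ∀ i ∈ Finset.univ, grad t i * grad t i ≤ ((N : ℝ) * T) ^ 2 := by
      intro i _
      have hS0 := hNTpos.trans_le hS
      have h3 : r t i / (∑ j, x t j * r t j) ≤ (N : ℝ) * T := by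
        rw [div_le_iff₀ hS0]
        rw [div_le_iff₀ (by positivity)] at hS
        linarith [hr1 i]
      have h4 : 0 ≤ r t i / (∑ j, x t j * r t j) := div_nonneg (hr0 i) hS0.le
      rw [hgrad, neg_div, neg_mul_neg, sq]
      gcongr
    refine (Finset.sum_le_card_nsmul _ _ _ hb).trans (le_of_eq ?_)
    simp
  have htrace : ∀ t, t ≤ T → (A t).trace ≤ (N : ℝ) ^ 2 + t * (N * ((N : ℝ) * T) ^ 2) := by
    intro t
    induction t with
    | zero => intro _; rw [hA0]; simp [sq]
    | succ t ih =>
      intro ht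
      have h1 := ih (by omega)
      have h2 := hgradsq (t + 1) (by omega) ht
      rw [hAsucc (t + 1) (by omega) ht, trace_add, trace_vecMulVec, Nat.add_sub_cancel]
      push_cast
      linarith
  have hlogdet : Real.log (A T).det - Real.log (A 0).det ≤ 5 * N * L := by
    have h0 : Real.log (A 0).det = N * Real.log N := by
      rw [hA0, det_smul, det_one, mul_one, Fintype.card_fin, Real.log_pow]
    have htr : (A T).trace ≤ N * (T : ℝ) ^ 5 := by
      refine (htrace T le_rfl).trans ?_
      have h1 : (N : ℝ) + N ^ 2 * T ^ 3 ≤ T ^ 5 := by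
        have h2 : (N : ℝ) ^ 2 ≤ (T - 1) ^ 2 := by gcongr; linarith
        have hT1 : (1 : ℝ) ≤ T := by linarith
        have h3 : (T : ℝ) ≤ T ^ 3 := le_self_pow₀ hT1 (by norm_num)
        have h4 : (N : ℝ) ^ 2 * T ^ 3 ≤ (T - 1) ^ 2 * T ^ 3 := by gcongr
        have h5 : (1 : ℝ) * T ^ 3 ≤ (2 * T - 1) * T ^ 3 := by gcongr; linarith
        nlinarith
      calc (N : ℝ) ^ 2 + T * (N * ((N : ℝ) * T) ^ 2) = N * ((N : ℝ) + N ^ 2 * T ^ 3) := by ring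
        _ ≤ N * (T : ℝ) ^ 5 := by gcongr
    have hdet := det_le_trace_pow (hApos T le_rfl).posSemidef
    rw [Fintype.card_fin] at hdet
    have hdet2 : (A T).det ≤ (N * (T : ℝ) ^ 5) ^ N :=
      hdet.trans (pow_le_pow_left₀ (hApos T le_rfl).posSemidef.trace_nonneg htr N)
    have h2 := Real.log_le_log (hApos T le_rfl).det_pos hdet2
    rw [Real.log_pow, Real.log_mul hN0.ne' (by positivity), Real.log_pow] at h2
    push_cast at h2
    rw [h0]
    linarith
  -- the learning rates
  let f : Fin N → ℕ → ℝ := fun i s => Real.log (1 / ((N : ℝ) * x s i)) / L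
  let m : ℕ → Fin N → ℝ := fun t i => ⨆ s ∈ Finset.Icc 1 t, f i s
  let c : ℕ → Fin N → ℝ := fun t i => 1 / (η * Real.exp (m t i))
  have hf1 : ∀ i, f i 1 = 0 := by
    intro i
    simp only [f, hx1]
    rw [mul_one_div_cancel hN0.ne']
    simp
  have hetac : ∀ t, 1 ≤ t → t ≤ T → ∀ i, 1 / eta t i = c t i := by
    intro t h1 h2 i
    rw [heta t (Finset.mem_Icc.2 ⟨h1, h2⟩) i]
  have hc0 : ∀ t i, 0 ≤ c t i := fun t i => by positivity
  have hfle : ∀ i s, 1 ≤ s → s ≤ T → f i s ≤ 1 := by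
    intro i s h1 h2
    have hx := (hxK s h1 (by omega)).2.2 i
    have hx0 := hKpos _ (hxK s h1 (by omega)) i
    rw [div_le_iff₀ (by positivity)] at hx
    simp only [f]
    rw [div_le_one hL0]
    refine Real.log_le_log (by positivity) ?_
    rw [div_le_iff₀ (by positivity)]
    linarith
  have hm1 : ∀ t, t ≤ T → ∀ i, m t i ≤ 1 := by
    intro t ht i
    refine biSup_finset_le zero_le_one fun s hs => ?_
    rw [Finset.mem_Icc] at hs
    exact hfle i s hs.1 (hs.2.trans ht)
  have hexp : ∀ i s, 1 ≤ s → s ≤ T → u i / x s i = N * u i * Real.exp (L * f i s) := by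
    intro i s h1 h2
    have hx0 := hKpos _ (hxK s h1 (by omega)) i
    simp only [f]
    rw [mul_div_cancel₀ _ hL0.ne', Real.exp_log (by positivity)]
    field_simp
  let P : ℕ → ℝ := fun t =>
    ∑ i, (1 / (8 * η * L) * (N * u i * Real.exp (L * m t i)) + (1 + 2 * L) * c t i)
  have htrans : ∀ t, 1 ≤ t → t + 1 ≤ T →
      barrierDiv β (A t) (c (t + 1)) u (x (t + 1)) ≤
        barrierDiv β (A t) (c t) u (x (t + 1)) + P t - P (t + 1) := by
    intro t h1 h2
    have hsum : ∑ i, c (t + 1) i * (u i / x (t + 1) i - 1 - Real.log (u i / x (t + 1) i)) ≤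
        ∑ i, c t i * (u i / x (t + 1) i - 1 - Real.log (u i / x (t + 1) i)) + P t - P (t + 1) := by
      simp only [P]
      rw [← Finset.sum_add_distrib, ← Finset.sum_sub_distrib]
      refine Finset.sum_le_sum fun i _ => ?_
      have hmax : m (t + 1) i = max (m t i) (f i (t + 1)) := biSup_Icc_succ (hf1 i) h1
      have hx0 := hKpos _ (hxK (t + 1) (by omega) (by omega)) i
      have hu0 := hKpos _ huK i
      have hylog : Real.log (u i / x (t + 1) i) ≤ 2 * L := by
        have hx := (hxK (t + 1) (by omega) (by omega)).2.2 i
        have hu1 : u i ≤ 1 := by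
          rw [← hu.2.1]
          exact Finset.single_le_sum (fun j _ => hu.1 j) (Finset.mem_univ i)
        rw [div_le_iff₀ (by positivity)] at hx
        have hle : u i / x (t + 1) i ≤ (T : ℝ) ^ 2 := by
          rw [div_le_iff₀ hx0]
          have : (N : ℝ) * T ≤ T ^ 2 := by nlinarith
          nlinarith
        have := Real.log_le_log (div_pos hu0 hx0) hle
        rw [Real.log_pow] at this
        exact_mod_cast this
      have hstep := barrier_coordinate_step (a := N * u i) hη0 hL
        (hmax ▸ le_max_left _ _ : m t i ≤ m (t + 1) i) (hm1 (t + 1) h2 i) (div_pos hu0 hx0) hylog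
        (by
          rcases le_total (f i (t + 1)) (m t i) with h | h
          · left; rw [hmax, max_eq_left h]
          · right; rw [hmax, max_eq_right h]; exact hexp i (t + 1) (by omega) h2)
      simp only [c]
      linarith
    rw [barrierDiv, barrierDiv]
    linarith
  have hstep : ∀ t, 1 ≤ t → t ≤ T →
      -Real.log (∑ i, x t i * r t i) - -Real.log (∑ i, u i * r t i) ≤
        barrierDiv β (A (t - 1)) (c t) u (x t) - barrierDiv β (A t) (c t) u (x (t + 1))
          + 1 / (2 * β) * (Real.log (A t).det - Real.log (A (t - 1)).det) := by
    intro t h1 h2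
    have hxt := hxK t h1 (by omega)
    have hxt' := hxK (t + 1) (by omega) (by omega)
    have hAt : (A t)ᵀ = A t := by simpa using (hApos t h2).isHermitian.eq
    have hDeq : ∀ y ∈ K, D t y (x t) = barrierDiv β (A t) (c t) y (x t) := by
      intro y hy
      rw [hD, hpsi, hpsi, ← bregman_eq_barrierDiv hAt (hKpos y hy) (hKpos _ hxt)]
      simp only [hgpsi, hetac t h1 h2]
    have hmin' : ∀ y ∈ K, x (t + 1) ⬝ᵥ grad t + barrierDiv β (A t) (c t) (x (t + 1)) (x t) ≤
        y ⬝ᵥ grad t + barrierDiv β (A t) (c t) y (x t) := by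
      intro y hy
      rw [← hDeq y hy, ← hDeq _ hxt']
      exact hmin t (Finset.mem_Icc.2 ⟨h1, h2⟩) y hy
    rw [hAsucc t h1 h2] at hmin' ⊢
    have hmirror := mirror_step_rank_one_le hβ0 (hApos (t - 1) (by omega)) (hc0 t) hK hKpos hxt hxt'
      huK hmin'
    refine le_trans ?_ hmirror
    have hSx := hNTpos.trans_le (hinner _ hxt t h1 h2)
    have hSu := hNTpos.trans_le (hinner _ huK t h1 h2)
    have hg : grad t ⬝ᵥ (x t - u) = (∑ i, u i * r t i) / (∑ i, x t i * r t i) - 1 := by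
      have h3 : grad t ⬝ᵥ (x t - u) = -(∑ i, (x t i - u i) * r t i) / (∑ i, x t i * r t i) := by
        rw [dotProduct, ← Finset.sum_neg_distrib, Finset.sum_div]
        refine Finset.sum_congr rfl fun i _ => ?_
        rw [hgrad, Pi.sub_apply]
        ring
      rw [h3]
      simp only [sub_mul, Finset.sum_sub_distrib]
      field_simp
      ring
    have habs : |grad t ⬝ᵥ (x t - u)| = |∑ i, grad t i * (u i - x t i)| := by
      rw [← neg_sub, dotProduct_neg, abs_neg]
      rfl
    have hlog := log_one_add_le_sub_sq hβ0 hβ (z := grad t ⬝ᵥ (x t - u))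
      (by rw [hg]; linarith [div_pos hSu hSx])
      (by rw [habs]; exact halpha t (Finset.mem_Icc.2 ⟨h1, h2⟩))
    have e : 1 + grad t ⬝ᵥ (x t - u) = (∑ i, u i * r t i) / (∑ i, x t i * r t i) := by
      rw [hg]; ring
    rw [e, Real.log_div hSu.ne' hSx.ne'] at hlog
    linarith
  have hclaim : ∀ t, 1 ≤ t → t ≤ T →
      ∑ s ∈ Finset.Icc 1 t, (-Real.log (∑ i, x s i * r s i) - -Real.log (∑ i, u i * r s i)) ≤
        barrierDiv β (A 0) (c 1) u (x 1) - barrierDiv β (A t) (c t) u (x (t + 1))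
          + 1 / (2 * β) * (Real.log (A t).det - Real.log (A 0).det) + P 1 - P t := by
    intro t h1
    induction t, h1 using Nat.le_induction with
    | base =>
      intro h2
      have := hstep 1 le_rfl h2
      rw [Finset.Icc_self, Finset.sum_singleton]
      linarith
    | succ t h1 ih =>
      intro h2
      have h3 := ih (by omega)
      have h4 := hstep (t + 1) (by omega) h2
      have h5 := htrans t h1 h2
      rw [Nat.add_sub_cancel] at h4
      rw [Finset.sum_Icc_succ_top (by omega)]
      linarith
  -- evaluation of the boundary terms
  have hsumu : ∑ i, (N : ℝ) * u i = N := by rw [← Finset.mul_sum, hu.2.1, mul_one]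
  have hm_one : ∀ i, m 1 i = 0 := fun i => biSup_Icc_one_one (hf1 i)
  have hc_one : ∀ i, c 1 i = 1 / η := fun i => by simp only [c, hm_one]; simp
  have hstart : barrierDiv β (A 0) (c 1) u (x 1) ≤ N * L / η + N * L / η := by
    rw [barrierDiv]
    refine add_le_add ?_ ?_
    · have hquad : (u - x 1) ⬝ᵥ A 0 *ᵥ (u - x 1) ≤ N := by
        rw [hA0, smul_mulVec, one_mulVec, dotProduct_smul, smul_eq_mul]
        have hb : (u - x 1) ⬝ᵥ (u - x 1) ≤ ∑ i, u i := by
          rw [dotProduct]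
          have hle : ∀ i ∈ Finset.univ, (u - x 1) i * (u - x 1) i ≤
              u i + (1 / (N : ℝ) * (1 / N) - 2 / N * u i) := by
            intro i _
            have h0 := hu.1 i
            have h1 : u i ≤ 1 := by
              rw [← hu.2.1]
              exact Finset.single_le_sum (fun j _ => hu.1 j) (Finset.mem_univ i)
            rw [Pi.sub_apply, hx1]
            have e : (u i - 1 / N) * (u i - 1 / N) =
                u i * u i + (1 / (N : ℝ) * (1 / N) - 2 / N * u i) := by ring
            rw [e]
            nlinarith
          refine (Finset.sum_le_sum hle).trans ?_
          rw [Finset.sum_add_distrib, Finset.sum_sub_distrib,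
            ← Finset.mul_sum Finset.univ u, hu.2.1]
          simp only [Finset.sum_const, Finset.card_univ, Fintype.card_fin, nsmul_eq_mul]
          have h1 : (N : ℝ) * (1 / N * (1 / N)) = 1 / N := by field_simp
          have h2 : 0 < 1 / (N : ℝ) := by positivity
          have h3 : 2 / (N : ℝ) = 2 * (1 / N) := by ring
          rw [h1, h3]
          linarith
        rw [hu.2.1] at hb
        nlinarith
      have h1 : β / 2 * ((u - x 1) ⬝ᵥ A 0 *ᵥ (u - x 1)) ≤ N := by nlinarith
      refine h1.trans ?_
      rw [le_div_iff₀ hη0]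
      nlinarith
    · have hle : ∀ i ∈ Finset.univ,
          c 1 i * (u i / x 1 i - 1 - Real.log (u i / x 1 i)) ≤ 1 / η * (N * u i - 1 + L) := by
        intro i _
        rw [hc_one]
        have e : u i / x 1 i = N * u i := by rw [hx1]; field_simp
        have hu0 := hKpos _ huK i
        have hlog : -L ≤ Real.log (N * u i) := by
          rw [hLdef, ← Real.log_inv]
          refine Real.log_le_log (by positivity) ?_
          have := hu.2.2 i
          rw [div_le_iff₀ (by positivity)] at this
          rw [inv_le_iff_one_le_mul₀ hT0]
          linarith
        rw [e]
        gcongr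
        linarith
      refine (Finset.sum_le_sum hle).trans (le_of_eq ?_)
      rw [← Finset.mul_sum, Finset.sum_add_distrib, Finset.sum_sub_distrib, hsumu]
      simp only [Finset.sum_const, Finset.card_univ, Fintype.card_fin, nsmul_eq_mul]
      ring
  have hP1 : P 1 ≤ 4 * (N * L / η) := by
    have e : P 1 = 1 / (8 * η * L) * N + (1 + 2 * L) * (N * (1 / η)) := by
      simp only [P, hm_one, hc_one, mul_zero, Real.exp_zero, mul_one]
      rw [Finset.sum_add_distrib, ← Finset.mul_sum, hsumu]
      simp only [Finset.sum_const, Finset.card_univ, Fintype.card_fin, nsmul_eq_mul]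
      ring
    have h1 : 1 / (8 * η * L) * N ≤ N / η := by
      rw [one_div_mul_eq_div]
      gcongr
      nlinarith
    have h2 : N / η ≤ N * L / η := by gcongr; nlinarith
    have h3 : (1 + 2 * L) * (N * (1 / η)) = N / η + 2 * (N * L / η) := by ring
    linarith
  have hPT : 1 / (8 * η * L) * ∑ i, ⨆ t ∈ Finset.Icc 1 T, u i / x t i ≤ P T := by
    rw [Finset.mul_sum]
    refine Finset.sum_le_sum fun i _ => ?_
    have hu0 := hKpos _ huK i
    have hsup : ⨆ t ∈ Finset.Icc 1 T, u i / x t i ≤ N * u i * Real.exp (L * m T i) := by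
      refine biSup_finset_le (by positivity) fun s hs => ?_
      have hs' := Finset.mem_Icc.1 hs
      rw [hexp i s hs'.1 hs'.2]
      have : f i s ≤ m T i := le_biSup_finset (f i) hs
      gcongr
    have h1 : 1 / (8 * η * L) * ⨆ t ∈ Finset.Icc 1 T, u i / x t i ≤
        1 / (8 * η * L) * (N * u i * Real.exp (L * m T i)) := by gcongr
    have h2 : 0 ≤ (1 + 2 * L) * c T i := mul_nonneg (by linarith) (hc0 T i)
    linarith
  have hfinal := hclaim T (by omega) le_rfl
  have hend := barrierDiv_nonneg hβ0.le (hApos T le_rfl).posSemidef (hc0 T) (hKpos u huK)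
    (hKpos _ (hxK (T + 1) (by omega) le_rfl))
  have hstab : 1 / (2 * β) * (Real.log (A T).det - Real.log (A 0).det) ≤ 8 * N * L / β := by
    calc 1 / (2 * β) * (Real.log (A T).det - Real.log (A 0).det)
        ≤ 1 / (2 * β) * (5 * N * L) := by gcongr
      _ = 5 / 2 * (N * L / β) := by field_simp
      _ ≤ 8 * (N * L / β) := by gcongr; norm_num
      _ = 8 * N * L / β := by ring
  have hNL : 0 ≤ N * L / η := by positivity
  have e10 : 10 * N * L / η = 10 * (N * L / η) := by ring
  rw [← Finset.sum_sub_distrib, e10]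
  linarith
end

section
/- Let the BARRONS iterates x_1, …, x_T be as in the context with parameters 0 < β ≤ 1/2 and 0 < η ≤ 1. For any u ∈ Δ̄_N satisfying β ≤ α_T(u), where α_t(u) = min{1/2, min_{s∈[t]} 1/(8·|⟨∇_s, u − x_s⟩|)}, one has Σ_{t=1}^T f_t(x_t) − Σ_{t=1}^T f_t(u) ≤ Σ_{t=1}^T ( ⟨∇_t, x_t − x_{t+1}⟩ + D_{ψ_t}(u, x_t) − D_{ψ_t}(u, x_{t+1}) − (β/2)·⟨∇_t, x_t − u⟩² ). -/
/-- A second-order upper bound for the logarithm near `1`. -/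
theorem log_one_add_le_sub_sq_div_four {v : ℝ} (hv : |v| ≤ 1 / 4) :
    Real.log (1 + v) ≤ v - v ^ 2 / 4 := by
  obtain ⟨h1, h2⟩ := abs_le.mp hv
  rw [Real.log_le_iff_le_exp (by linarith)]
  rcases le_total 0 v with h | h
  · have hs : 0 ≤ v - v ^ 2 / 4 := by nlinarith
    refine le_trans ?_ (Real.quadratic_le_exp_of_nonneg hs)
    have : 0 ≤ v ^ 2 * ((1 - v / 4) ^ 2 / 2 - 1 / 4) :=
      mul_nonneg (sq_nonneg v) (by nlinarith)
    nlinarith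
  · have he : Real.exp (v - v ^ 2 / 4) = Real.exp ((v - v ^ 2 / 4) / 2) ^ 2 := by
      rw [← Real.exp_nat_mul]
      congr 1
      push_cast
      ring
    have hle : 1 + (v - v ^ 2 / 4) / 2 ≤ Real.exp ((v - v ^ 2 / 4) / 2) := by
      linarith [Real.add_one_le_exp ((v - v ^ 2 / 4) / 2)]
    have hpos : 0 ≤ 1 + (v - v ^ 2 / 4) / 2 := by nlinarith
    have hsq := pow_le_pow_left₀ hpos hle 2
    have hcube : 0 ≤ v ^ 2 * (-v) := mul_nonneg (sq_nonneg v) (by linarith)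
    rw [he]
    nlinarith [sq_nonneg (v ^ 2)]

/-- The exp-concavity inequality for `-log`, in one variable. -/
theorem log_one_sub_le {β z : ℝ} (hβ0 : 0 < β) (hβ : β ≤ 1 / 2) (hz : z < 1)
    (hβz : 8 * β * |z| ≤ 1) : Real.log (1 - z) ≤ -z - β / 2 * z ^ 2 := by
  have habs : |-(2 * β * z)| ≤ 1 / 4 := by
    rw [abs_neg, abs_mul, abs_of_pos (by linarith : 0 < 2 * β)]
    linarith
  have hlog := log_one_add_le_sub_sq_div_four habs
  have hbern : (1 + -z) ^ (2 * β) ≤ 1 + 2 * β * -z :=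
    rpow_one_add_le_one_add_mul_self (by linarith) (by linarith) (by linarith)
  have hmono := Real.log_le_log (Real.rpow_pos_of_pos (by linarith) _) hbern
  rw [Real.log_rpow (by linarith)] at hmono
  have hmul : 2 * β * Real.log (1 - z) ≤ 2 * β * (-z - β / 2 * z ^ 2) := by
    rw [sub_eq_add_neg]
    calc 2 * β * Real.log (1 + -z) ≤ Real.log (1 + 2 * β * -z) := hmono
      _ = Real.log (1 + -(2 * β * z)) := by ring_nf
      _ ≤ _ := hlog
      _ = _ := by ring
  exact le_of_mul_le_mul_left hmul (by linarith)

/-- If `ε * L + ε ^ 2 * C` is nonnegative for all small positive `ε`, then so is `L`. -/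
theorem nonneg_of_forall_mul_add_sq_mul_nonneg {L C : ℝ}
    (h : ∀ ε : ℝ, 0 < ε → ε ≤ 1 → 0 ≤ ε * L + ε ^ 2 * C) : 0 ≤ L := by
  by_contra! hL
  have hC : 0 < |C| - L := by linarith [abs_nonneg C]
  have hε : 0 < -L / (2 * (|C| - L)) := div_pos (by linarith) (by linarith)
  have hε1 : -L / (2 * (|C| - L)) ≤ 1 := by
    rw [div_le_one (by linarith)]
    linarith [abs_nonneg C]
  have hkey := h _ hε hε1
  set ε := -L / (2 * (|C| - L)) with hεdef
  have hεmul : ε * (2 * (|C| - L)) = -L := by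
    rw [hεdef]
    field_simp
  have hpos : 0 ≤ L + ε * C := by
    have : 0 ≤ ε * (L + ε * C) := by linarith
    exact nonneg_of_mul_nonneg_right this hε
  have hCabs : ε * C ≤ ε * |C| := mul_le_mul_of_nonneg_left (le_abs_self C) hε.le
  nlinarith

theorem log_div_add_div_sub_one_nonneg {p q : ℝ} (hp : 0 < p) (hq : 0 < q) :
    0 ≤ Real.log (q / p) + (p / q - 1) := by
  have := Real.log_le_sub_one_of_pos (div_pos hp hq)
  rw [← inv_div p q, Real.log_inv]
  linarith

theorem log_div_add_div_sub_one_le {p q m : ℝ} (hm : 0 < m) (hp : m ≤ p) (hq : m ≤ q) :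
    Real.log (q / p) + (p / q - 1) ≤ (p - q) ^ 2 / m ^ 2 := by
  have hp0 : 0 < p := by linarith
  have hq0 : 0 < q := by linarith
  have hlog := Real.log_le_sub_one_of_pos (div_pos hq0 hp0)
  calc Real.log (q / p) + (p / q - 1) ≤ (q / p - 1) + (p / q - 1) := by linarith
    _ = (p - q) ^ 2 / (p * q) := by field_simp; ring
    _ ≤ (p - q) ^ 2 / m ^ 2 := by
      gcongr
      nlinarith

section Regularizer

variable {ι : Type*} [Fintype ι]

/-- The Bregman divergence of a quadratic form plus a weighted log-barrier, expanded. -/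
theorem bregman_quadratic_add_logBarrier (β : ℝ) (M : Matrix ι ι ℝ)
    (hM : ∀ i j, M i j = M j i) (w p q : ι → ℝ) (hp : ∀ i, 0 < p i) (hq : ∀ i, 0 < q i) :
    (β / 2 * ∑ i, ∑ j, p i * M i j * p j + ∑ i, w i * Real.log (1 / p i))
      - (β / 2 * ∑ i, ∑ j, q i * M i j * q j + ∑ i, w i * Real.log (1 / q i))
      - ∑ i, (β * (∑ j, M i j * q j) - w i * (1 / q i)) * (p i - q i)
    = β / 2 * (∑ i, ∑ j, (p i - q i) * M i j * (p j - q j))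
      + ∑ i, w i * (Real.log (q i / p i) + (p i / q i - 1)) := by
  have hswap : ∑ i, ∑ j, q i * M i j * p j = ∑ i, ∑ j, p i * M i j * q j := by
    rw [Finset.sum_comm]
    refine Finset.sum_congr rfl fun i _ => Finset.sum_congr rfl fun j _ => ?_
    rw [hM j i]
    ring
  have hquad : ∑ i, ∑ j, (p i - q i) * M i j * (p j - q j)
      = ∑ i, ∑ j, p i * M i j * p j - 2 * ∑ i, ∑ j, p i * M i j * q j
        + ∑ i, ∑ j, q i * M i j * q j := by
    have : ∑ i, ∑ j, (p i - q i) * M i j * (p j - q j)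
        = ∑ i, ∑ j, p i * M i j * p j - ∑ i, ∑ j, p i * M i j * q j
          - ∑ i, ∑ j, q i * M i j * p j + ∑ i, ∑ j, q i * M i j * q j := by
      simp only [← Finset.sum_sub_distrib, ← Finset.sum_add_distrib]
      exact Finset.sum_congr rfl fun i _ => Finset.sum_congr rfl fun j _ => by ring
    rw [this, hswap]
    ring
  have hlin : ∑ i, (β * (∑ j, M i j * q j) - w i * (1 / q i)) * (p i - q i)
      = β * (∑ i, ∑ j, p i * M i j * q j) - β * (∑ i, ∑ j, q i * M i j * q j)
        - ∑ i, w i * (p i / q i - 1) := by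
    rw [← mul_sub, ← Finset.sum_sub_distrib, Finset.mul_sum, ← Finset.sum_sub_distrib]
    refine Finset.sum_congr rfl fun i _ => ?_
    have h1 : ∀ c : ℝ, ∑ j, c * M i j * q j = c * ∑ j, M i j * q j := fun c => by
      rw [Finset.mul_sum]
      exact Finset.sum_congr rfl fun j _ => by ring
    have := (hq i).ne'
    rw [h1, h1]
    field_simp
  have hlog : ∑ i, w i * (Real.log (q i / p i) + (p i / q i - 1))
      = ∑ i, w i * Real.log (1 / p i) - ∑ i, w i * Real.log (1 / q i)
        + ∑ i, w i * (p i / q i - 1) := by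
    rw [← Finset.sum_sub_distrib, ← Finset.sum_add_distrib]
    refine Finset.sum_congr rfl fun i _ => ?_
    rw [Real.log_div (hq i).ne' (hp i).ne', one_div, one_div, Real.log_inv, Real.log_inv]
    ring
  rw [hquad, hlin, hlog]
  ring

/-- One step of mirror descent: if `x'` minimizes `⟨·, g⟩ + D(·, x)` over a truncated simplex,
then the linear loss against a comparator `u` is bounded by a difference of divergences. -/
theorem mirror_descent_step {β m : ℝ} (hβ : 0 ≤ β) (hm : 0 < m) (M : Matrix ι ι ℝ)
    (hM : ∀ i j, M i j = M j i) (hpsd : ∀ v : ι → ℝ, 0 ≤ ∑ i, ∑ j, v i * M i j * v j)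
    (w : ι → ℝ) (hw : ∀ i, 0 ≤ w i) (psi : (ι → ℝ) → ℝ)
    (hpsi : ∀ p, psi p = β / 2 * ∑ i, ∑ j, p i * M i j * p j + ∑ i, w i * Real.log (1 / p i))
    (gpsi : (ι → ℝ) → ι → ℝ)
    (hgpsi : ∀ p i, gpsi p i = β * (∑ j, M i j * p j) - w i * (1 / p i))
    (D : (ι → ℝ) → (ι → ℝ) → ℝ)
    (hD : ∀ p q, D p q = psi p - psi q - ∑ i, gpsi q i * (p i - q i))
    {g x x' u : ι → ℝ} (hx : ∀ i, m ≤ x i) (hx' : ∀ i, m ≤ x' i) (hx's : ∑ i, x' i = 1)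
    (hu : ∀ i, m ≤ u i) (hus : ∑ i, u i = 1)
    (hmin : ∀ y : ι → ℝ, (∀ i, m ≤ y i) → ∑ i, y i = 1 →
      (∑ i, x' i * g i) + D x' x ≤ (∑ i, y i * g i) + D y x) :
    ∑ i, g i * (x' i - u i) ≤ D u x - D u x' := by
  have hexp : ∀ p q : ι → ℝ, (∀ i, m ≤ p i) → (∀ i, m ≤ q i) →
      D p q = β / 2 * (∑ i, ∑ j, (p i - q i) * M i j * (p j - q j))
        + ∑ i, w i * (Real.log (q i / p i) + (p i / q i - 1)) := by
    intro p q hp hq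
    rw [hD, hpsi, hpsi, ← bregman_quadratic_add_logBarrier β M hM w p q
      (fun i => hm.trans_le (hp i)) (fun i => hm.trans_le (hq i))]
    simp only [hgpsi]
  have hnonneg : 0 ≤ D x' x := by
    rw [hexp x' x hx' hx]
    refine add_nonneg (mul_nonneg (by linarith) (hpsd fun i => x' i - x i)) ?_
    exact Finset.sum_nonneg fun i _ => mul_nonneg (hw i)
      (log_div_add_div_sub_one_nonneg (hm.trans_le (hx' i)) (hm.trans_le (hx i)))
  have hthree : ∀ y : ι → ℝ, D y x = D x' x + D y x'
      + ∑ i, (gpsi x' i - gpsi x i) * (y i - x' i) := by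
    intro y
    have hsplit : ∑ i, (gpsi x' i - gpsi x i) * (y i - x' i)
        = ∑ i, gpsi x' i * (y i - x' i)
          - (∑ i, gpsi x i * (y i - x i) - ∑ i, gpsi x i * (x' i - x i)) := by
      simp only [← Finset.sum_sub_distrib]
      exact Finset.sum_congr rfl fun i _ => by ring
    rw [hsplit, hD, hD, hD]
    ring
  have hopt : 0 ≤ ∑ i, g i * (u i - x' i) + ∑ i, (gpsi x' i - gpsi x i) * (u i - x' i) := by
    refine nonneg_of_forall_mul_add_sq_mul_nonneg
      (C := β / 2 * (∑ i, ∑ j, (u i - x' i) * M i j * (u j - x' j))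
        + ∑ i, w i * ((u i - x' i) ^ 2 / m ^ 2)) fun ε hε hε1 => ?_
    set y : ι → ℝ := fun i => x' i + ε * (u i - x' i) with hy
    have hyx : ∀ i, y i - x' i = ε * (u i - x' i) := fun i => by simp [hy]
    have hym : ∀ i, m ≤ y i := fun i => by
      have h1 := mul_nonneg hε.le (sub_nonneg.mpr (hu i))
      have h2 := mul_nonneg (sub_nonneg.mpr hε1) (sub_nonneg.mpr (hx' i))
      simp only [hy]
      linarith
    have hys : ∑ i, y i = 1 := by
      simp only [hy, Finset.sum_add_distrib, ← Finset.mul_sum, Finset.sum_sub_distrib, hus, hx's]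
      ring
    have hDy : D y x' ≤ ε ^ 2 * (β / 2 * (∑ i, ∑ j, (u i - x' i) * M i j * (u j - x' j))
        + ∑ i, w i * ((u i - x' i) ^ 2 / m ^ 2)) := by
      rw [hexp y x' hym hx', mul_add]
      refine add_le_add (le_of_eq ?_) ?_
      · simp only [hyx, Finset.mul_sum]
        exact Finset.sum_congr rfl fun i _ => Finset.sum_congr rfl fun j _ => by ring
      · rw [Finset.mul_sum]
        refine Finset.sum_le_sum fun i _ => ?_
        calc w i * (Real.log (x' i / y i) + (y i / x' i - 1))
            ≤ w i * ((y i - x' i) ^ 2 / m ^ 2) :=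
              mul_le_mul_of_nonneg_left (log_div_add_div_sub_one_le hm (hym i) (hx' i)) (hw i)
          _ = ε ^ 2 * (w i * ((u i - x' i) ^ 2 / m ^ 2)) := by rw [hyx]; ring
    have hkey := hmin y hym hys
    rw [hthree y] at hkey
    have hlin1 : ∑ i, y i * g i = ∑ i, x' i * g i + ε * ∑ i, g i * (u i - x' i) := by
      rw [Finset.mul_sum, ← Finset.sum_add_distrib]
      exact Finset.sum_congr rfl fun i _ => by simp only [hy]; ring
    have hlin2 : ∑ i, (gpsi x' i - gpsi x i) * (y i - x' i)
        = ε * ∑ i, (gpsi x' i - gpsi x i) * (u i - x' i) := by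
      rw [Finset.mul_sum]
      exact Finset.sum_congr rfl fun i _ => by rw [hyx]; ring
    rw [hlin1, hlin2] at hkey
    linarith
  have hneg : ∑ i, g i * (x' i - u i) = -∑ i, g i * (u i - x' i) := by
    rw [← Finset.sum_neg_distrib]
    exact Finset.sum_congr rfl fun i _ => by ring
  rw [hneg, hthree u]
  linarith

end Regularizer

/- STATEMENT 1: first-step regret inequality for BARRONS (Lemma 4 of the paper).
   The BARRONS iterates are specified by hypotheses encoding their defining equations. -/

theorem barrons_first_step
    (N T : ℕ) (hN : 2 ≤ N) (hT : N < T)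
    (β η : ℝ) (hβ0 : 0 < β) (hβ : β ≤ 1 / 2) (hη0 : 0 < η) (hη : η ≤ 1)
    -- reward vectors: nonnegative with maximum coordinate equal to 1
    (r : ℕ → Fin N → ℝ)
    (hr : ∀ t ∈ Finset.Icc 1 T, (∀ i, 0 ≤ r t i) ∧ (∃ i, r t i = 1) ∧ ∀ i, r t i ≤ 1)
    -- the iterates x_1, ..., x_{T+1}
    (x : ℕ → Fin N → ℝ)
    (hx1 : ∀ i, x 1 i = 1 / N)
    (hxmem : ∀ t ∈ Finset.Icc 1 (T + 1),
        (∀ i, 0 ≤ x t i) ∧ (∑ i, x t i) = 1 ∧ ∀ i, 1 / ((N : ℝ) * T) ≤ x t i)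
    -- the gradients ∇_t = -r_t / ⟨x_t, r_t⟩
    (grad : ℕ → Fin N → ℝ)
    (hgrad : ∀ t i, grad t i = -(r t i) / ∑ j, x t j * r t j)
    -- the matrices A_t
    (A : ℕ → Matrix (Fin N) (Fin N) ℝ)
    (hA0 : A 0 = (N : ℝ) • (1 : Matrix (Fin N) (Fin N) ℝ))
    (hA : ∀ t ∈ Finset.Icc 1 T, ∀ i j, A t i j = A (t - 1) i j + grad t i * grad t j)
    -- the individual learning rates η_{t,i}
    (eta : ℕ → Fin N → ℝ)
    (heta : ∀ t ∈ Finset.Icc 1 T, ∀ i,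
        eta t i = η * Real.exp (⨆ s ∈ Finset.Icc 1 t,
          Real.log (1 / ((N : ℝ) * x s i)) / Real.log T))
    -- the regularizer ψ_t, its gradient, and its Bregman divergence
    (psi : ℕ → (Fin N → ℝ) → ℝ)
    (hpsi : ∀ t p, psi t p =
        β / 2 * ∑ i, ∑ j, p i * A t i j * p j + ∑ i, (1 / eta t i) * Real.log (1 / p i))
    (gpsi : ℕ → (Fin N → ℝ) → Fin N → ℝ)
    (hgpsi : ∀ t p i, gpsi t p i = β * (∑ j, A t i j * p j) - (1 / eta t i) * (1 / p i))
    (D : ℕ → (Fin N → ℝ) → (Fin N → ℝ) → ℝ)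
    (hD : ∀ t p q, D t p q = psi t p - psi t q - ∑ i, gpsi t q i * (p i - q i))
    -- x_{t+1} minimizes ⟨x, ∇_t⟩ + D_{ψ_t}(x, x_t) over Δ̄_N
    (hmin : ∀ t ∈ Finset.Icc 1 T, ∀ y : Fin N → ℝ,
        ((∀ i, 0 ≤ y i) ∧ (∑ i, y i) = 1 ∧ ∀ i, 1 / ((N : ℝ) * T) ≤ y i) →
        (∑ i, x (t + 1) i * grad t i) + D t (x (t + 1)) (x t)
          ≤ (∑ i, y i * grad t i) + D t y (x t))
    -- the comparator u ∈ Δ̄_N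
    (u : Fin N → ℝ)
    (hu : (∀ i, 0 ≤ u i) ∧ (∑ i, u i) = 1 ∧ ∀ i, 1 / ((N : ℝ) * T) ≤ u i)
    -- β ≤ α_T(u), i.e. β ≤ 1/2 (above) and β ≤ 1/(8|⟨∇_s, u - x_s⟩|) for all s ∈ [T]
    (halpha : ∀ s ∈ Finset.Icc 1 T, 8 * β * |∑ i, grad s i * (u i - x s i)| ≤ 1) :
    (∑ t ∈ Finset.Icc 1 T, -Real.log (∑ i, x t i * r t i))
      - ∑ t ∈ Finset.Icc 1 T, -Real.log (∑ i, u i * r t i)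
    ≤ ∑ t ∈ Finset.Icc 1 T,
        ((∑ i, grad t i * (x t i - x (t + 1) i))
          + D t u (x t) - D t u (x (t + 1))
          - β / 2 * (∑ i, grad t i * (x t i - u i)) ^ 2) := by
  have hm : 0 < 1 / ((N : ℝ) * T) := by
    have : 0 < N := by omega
    have : 0 < T := by omega
    positivity
  have hApsd : ∀ t ≤ T, (∀ i j, A t i j = A t j i) ∧
      ∀ v : Fin N → ℝ, 0 ≤ ∑ i, ∑ j, v i * A t i j * v j := by
    intro t
    induction t with
    | zero =>
      intro _
      refine ⟨fun i j => ?_, fun v => ?_⟩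
      · simp [hA0, Matrix.one_apply, eq_comm]
      · have : ∑ i, ∑ j, v i * A 0 i j * v j = ∑ i, (N : ℝ) * v i ^ 2 := by
          refine Finset.sum_congr rfl fun i _ => ?_
          simp [hA0, Matrix.one_apply]
          ring
        rw [this]
        positivity
    | succ k ih =>
      intro hk
      obtain ⟨hsymm, hpsd⟩ := ih (by omega)
      have hstep : ∀ i j, A (k + 1) i j = A k i j + grad (k + 1) i * grad (k + 1) j :=
        fun i j => hA (k + 1) (Finset.mem_Icc.mpr ⟨by omega, hk⟩) i j
      refine ⟨fun i j => by rw [hstep, hstep, hsymm i j, mul_comm (grad (k + 1) i)], fun v => ?_⟩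
      have : ∑ i, ∑ j, v i * A (k + 1) i j * v j
          = ∑ i, ∑ j, v i * A k i j * v j + (∑ i, v i * grad (k + 1) i) ^ 2 := by
        rw [sq, Finset.sum_mul_sum]
        simp only [← Finset.sum_add_distrib]
        exact Finset.sum_congr rfl fun i _ => Finset.sum_congr rfl fun j _ => by
          rw [hstep]; ring
      rw [this]
      exact add_nonneg (hpsd v) (sq_nonneg _)
  rw [← Finset.sum_sub_distrib]
  refine Finset.sum_le_sum fun t ht => ?_
  obtain ⟨ht1, htT⟩ := Finset.mem_Icc.mp ht
  obtain ⟨-, -, hx⟩ := hxmem t (Finset.mem_Icc.mpr ⟨ht1, by omega⟩)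
  obtain ⟨-, hx's, hx'⟩ := hxmem (t + 1) (Finset.mem_Icc.mpr ⟨by omega, by omega⟩)
  obtain ⟨-, hus, hum⟩ := hu
  obtain ⟨hr0, ⟨k, hk⟩, -⟩ := hr t ht
  have hmd : ∑ i, grad t i * (x (t + 1) i - u i) ≤ D t u (x t) - D t u (x (t + 1)) := by
    obtain ⟨hsymm, hpsd⟩ := hApsd t htT
    refine mirror_descent_step hβ0.le hm (A t) hsymm hpsd (fun i => 1 / eta t i) (fun i => ?_)
      (psi t) (hpsi t) (gpsi t) (hgpsi t) (D t) (hD t) hx hx' hx's hum hus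
      fun y hy hys => hmin t ht y ⟨fun i => hm.le.trans (hy i), hys, hy⟩
    rw [heta t ht i]
    positivity
  have hinner : ∀ p : Fin N → ℝ, (∀ i, 1 / ((N : ℝ) * T) ≤ p i) → 0 < ∑ i, p i * r t i :=
    fun p hp => Finset.sum_pos' (fun i _ => mul_nonneg (hm.le.trans (hp i)) (hr0 i))
      ⟨k, Finset.mem_univ k, by rw [hk, mul_one]; exact hm.trans_le (hp k)⟩
  have hxr := hinner (x t) hx
  have hur := hinner u hum
  have hz : ∑ i, grad t i * (u i - x t i) = 1 - (∑ i, u i * r t i) / ∑ i, x t i * r t i := by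
    rw [← div_self hxr.ne', ← sub_div, ← Finset.sum_sub_distrib, Finset.sum_div]
    refine Finset.sum_congr rfl fun i _ => ?_
    rw [hgrad]
    ring
  have hlog := log_one_sub_le hβ0 hβ (by rw [hz]; linarith [div_pos hur hxr]) (halpha t ht)
  have hflip : ∑ i, grad t i * (x t i - u i) = -∑ i, grad t i * (u i - x t i) := by
    rw [← Finset.sum_neg_distrib]
    exact Finset.sum_congr rfl fun i _ => by ring
  have hsplit : ∑ i, grad t i * (x t i - u i)
      = ∑ i, grad t i * (x t i - x (t + 1) i) + ∑ i, grad t i * (x (t + 1) i - u i) := by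
    rw [← Finset.sum_add_distrib]
    exact Finset.sum_congr rfl fun i _ => by ring
  have hdiff : Real.log (1 - ∑ i, grad t i * (u i - x t i))
      = Real.log (∑ i, u i * r t i) - Real.log (∑ i, x t i * r t i) := by
    rw [hz, sub_sub_cancel, Real.log_div hur.ne' hxr.ne']
  have hsq : (∑ i, grad t i * (x t i - u i)) ^ 2 = (∑ i, grad t i * (u i - x t i)) ^ 2 := by
    rw [hflip, neg_sq]
  rw [hsq]
  linarith
end

section
/- Let the BARRONS iterates x_1, …, x_T be as in the context with parameters 0 < β ≤ 1/2 and 0 < η ≤ 1. Then Σ_{t=1}^T ⟨∇_t, x_t − x_{t+1}⟩ ≤ 8·N·ln T/β. -/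
open Matrix

/-- The rank-one update inequality behind the elliptical potential bound: for every `z` and `c`,
`2 c ⟨g, z⟩ - c² zᵀ(B + ggᵀ)z ≤ gᵀ(B + ggᵀ)⁻¹g ≤ ln det (B + ggᵀ) - ln det B`. -/
theorem rankOne_update_le_log_det_sub {n : Type*} [Fintype n] [DecidableEq n]
    {A B : Matrix n n ℝ} (hA : A.PosDef) (hB : B.PosDef) (g z : n → ℝ) (c : ℝ)
    (hAB : A = B + vecMulVec g g) :
    2 * c * (g ⬝ᵥ z) - c ^ 2 * (z ⬝ᵥ A *ᵥ z) ≤ Real.log A.det - Real.log B.det := by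
  obtain ⟨w, hw⟩ : ∃ w, A *ᵥ w = g :=
    ⟨A⁻¹ *ᵥ g, by
      rw [mulVec_mulVec, mul_nonsing_inv _ ((isUnit_iff_isUnit_det A).mp hA.isUnit), one_mulVec]⟩
  have hdet : B.det = A.det * (1 - g ⬝ᵥ w) := by
    have hfac : B = A * (1 + replicateCol Unit w * replicateRow Unit (-g)) := by
      rw [← vecMulVec_eq, Matrix.mul_add, Matrix.mul_one, mul_vecMulVec, hw, vecMulVec_neg, hAB]
      abel
    rw [hfac, det_mul, det_one_add_replicateCol_mul_replicateRow, neg_dotProduct, ← sub_eq_add_neg]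
  have hApos := hA.det_pos
  have hs : 0 < 1 - g ⬝ᵥ w := by
    have hBpos := hB.det_pos
    rw [hdet] at hBpos
    exact (mul_pos_iff_of_pos_left hApos).mp hBpos
  have hlog : Real.log B.det = Real.log A.det + Real.log (1 - g ⬝ᵥ w) := by
    rw [hdet, Real.log_mul hApos.ne' hs.ne']
  have hquad := hA.posSemidef.dotProduct_mulVec_nonneg (w - c • z)
  have hsymm : w ⬝ᵥ A *ᵥ z = g ⬝ᵥ z := by
    have hT : Aᵀ = A := by simpa using hA.isHermitian.eq
    rw [dotProduct_mulVec, ← mulVec_transpose, hT, hw]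
  simp only [star_trivial, mulVec_sub, mulVec_smul, sub_dotProduct, dotProduct_sub,
    smul_dotProduct, dotProduct_smul, smul_eq_mul, hw, hsymm] at hquad
  rw [dotProduct_comm w g, dotProduct_comm z g] at hquad
  have := Real.log_le_sub_one_of_pos hs
  nlinarith

/-- The determinant–trace inequality `ln det A ≤ n ln (tr A / n)`. -/
theorem Matrix.PosDef.log_det_le {n : Type*} [Fintype n] [DecidableEq n] [Nonempty n]
    {A : Matrix n n ℝ} (hA : A.PosDef) :
    Real.log A.det ≤ Fintype.card n * Real.log (A.trace / Fintype.card n) := by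
  have hcard : (0 : ℝ) < Fintype.card n := by exact_mod_cast Fintype.card_pos
  have hc : 0 < A.trace / Fintype.card n := div_pos hA.trace_pos hcard
  set c := A.trace / Fintype.card n with hcdef
  have htr : A.trace = ∑ i, hA.isHermitian.eigenvalues i := by
    simpa using hA.isHermitian.trace_eq_sum_eigenvalues
  have hdet : A.det = ∏ i, hA.isHermitian.eigenvalues i := by
    simpa using hA.isHermitian.det_eq_prod_eigenvalues
  rw [hdet, Real.log_prod fun i _ => (hA.eigenvalues_pos i).ne']
  calc ∑ i, Real.log (hA.isHermitian.eigenvalues i)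
      ≤ ∑ i, (hA.isHermitian.eigenvalues i / c - 1 + Real.log c) := by
        refine Finset.sum_le_sum fun i _ => ?_
        have h := Real.log_le_sub_one_of_pos (div_pos (hA.eigenvalues_pos i) hc)
        rw [Real.log_div (hA.eigenvalues_pos i).ne' hc.ne'] at h
        linarith
    _ = Fintype.card n * Real.log c := by
        have hsum : A.trace / c = Fintype.card n := by
          rw [hcdef]; field_simp [hA.trace_pos.ne']
        rw [Finset.sum_add_distrib, Finset.sum_sub_distrib, ← Finset.sum_div, ← htr, hsum]
        simp

/-- The Bregman divergence of a quadratic form plus a weighted log-barrier dominates its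
quadratic part. -/
theorem quadratic_le_bregman_log_barrier {n : Type*} [Fintype n] {A : Matrix n n ℝ}
    (hA : Aᵀ = A) {β : ℝ} {a p q : n → ℝ} (ha : ∀ i, 0 ≤ a i) (hp : ∀ i, 0 < p i)
    (hq : ∀ i, 0 < q i) :
    β / 2 * ((q - p) ⬝ᵥ A *ᵥ (q - p)) ≤
      (β / 2 * ∑ i, ∑ j, p i * A i j * p j + ∑ i, a i * Real.log (1 / p i)) -
      (β / 2 * ∑ i, ∑ j, q i * A i j * q j + ∑ i, a i * Real.log (1 / q i)) -
      ∑ i, (β * (∑ j, A i j * q j) - a i * (1 / q i)) * (p i - q i) := by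
  have hform (v : n → ℝ) : ∑ i, ∑ j, v i * A i j * v j = v ⬝ᵥ A *ᵥ v := by
    simp only [dotProduct, mulVec, Finset.mul_sum, mul_assoc]
  have hlin : ∑ i, (β * (∑ j, A i j * q j) - a i * (1 / q i)) * (p i - q i) =
      β * ((p - q) ⬝ᵥ A *ᵥ q) - ∑ i, a i * (1 / q i) * (p i - q i) := by
    rw [dotProduct, Finset.mul_sum, ← Finset.sum_sub_distrib]
    refine Finset.sum_congr rfl fun i _ => ?_
    simp only [mulVec, dotProduct, Pi.sub_apply]
    ring
  have hbarrier : 0 ≤ ∑ i, a i * Real.log (1 / p i) - ∑ i, a i * Real.log (1 / q i) +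
      ∑ i, a i * (1 / q i) * (p i - q i) := by
    rw [← Finset.sum_sub_distrib, ← Finset.sum_add_distrib]
    refine Finset.sum_nonneg fun i _ => ?_
    have h := Real.log_le_sub_one_of_pos (div_pos (hp i) (hq i))
    rw [Real.log_div (hp i).ne' (hq i).ne'] at h
    have hdiff : 1 / q i * (p i - q i) = p i / q i - 1 := by
      field_simp [(hq i).ne']
    rw [mul_assoc, hdiff, one_div, one_div, Real.log_inv, Real.log_inv]
    nlinarith [ha i]
  have hsymm : q ⬝ᵥ A *ᵥ p = p ⬝ᵥ A *ᵥ q := by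
    rw [dotProduct_mulVec, ← mulVec_transpose, hA, dotProduct_comm]
  rw [hform, hform, hlin]
  simp only [mulVec_sub, sub_dotProduct, dotProduct_sub, hsymm]
  linarith

/-- If all coordinates of `x` are at least `b > 0` and `r` is nonnegative and nonzero, then the
gradient of `-ln ⟨x, r⟩` has squared Euclidean norm at most `1 / b²`. -/
theorem sum_sq_log_loss_grad_le {n : Type*} [Fintype n] {x r : n → ℝ} {b : ℝ} (hb : 0 < b)
    (hx : ∀ i, b ≤ x i) (hr : ∀ i, 0 ≤ r i) (hr' : ∃ i, 0 < r i) :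
    ∑ i, (-(r i) / ∑ j, x j * r j) ^ 2 ≤ (1 / b) ^ 2 := by
  set R := ∑ j, r j
  set S := ∑ j, x j * r j
  have hR : 0 < R := Finset.sum_pos' (fun i _ => hr i) (by simpa using hr')
  have hbS : b * R ≤ S := by
    rw [Finset.mul_sum]
    exact Finset.sum_le_sum fun i _ => mul_le_mul_of_nonneg_right (hx i) (hr i)
  have hS : 0 < S := (mul_pos hb hR).trans_le hbS
  calc ∑ i, (-(r i) / S) ^ 2 = (∑ i, r i ^ 2) / S ^ 2 := by
        rw [Finset.sum_div]
        exact Finset.sum_congr rfl fun i _ => by rw [div_pow, neg_sq]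
    _ ≤ R ^ 2 / S ^ 2 := by
        gcongr
        exact Finset.sum_sq_le_sq_sum_of_nonneg fun i _ => hr i
    _ = (R / S) ^ 2 := (div_pow _ _ _).symm
    _ ≤ (1 / b) ^ 2 := by
        gcongr ?_ ^ 2
        rw [div_le_div_iff₀ hS hb]
        linarith


/- STATEMENT 3: Lemma 6 of the paper, total bound on the linear terms ⟨∇_t, x_t - x_{t+1}⟩. -/

theorem barrons_linear_term
    (N T : ℕ) (hN : 2 ≤ N) (hT : N < T)
    (β η : ℝ) (hβ0 : 0 < β) (hβ : β ≤ 1 / 2) (hη0 : 0 < η) (hη : η ≤ 1)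
    -- reward vectors: nonnegative with maximum coordinate equal to 1
    (r : ℕ → Fin N → ℝ)
    (hr : ∀ t ∈ Finset.Icc 1 T, (∀ i, 0 ≤ r t i) ∧ (∃ i, r t i = 1) ∧ ∀ i, r t i ≤ 1)
    -- the iterates x_1, ..., x_{T+1}
    (x : ℕ → Fin N → ℝ)
    (hx1 : ∀ i, x 1 i = 1 / N)
    (hxmem : ∀ t ∈ Finset.Icc 1 (T + 1),
        (∀ i, 0 ≤ x t i) ∧ (∑ i, x t i) = 1 ∧ ∀ i, 1 / ((N : ℝ) * T) ≤ x t i)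
    -- the gradients ∇_t = -r_t / ⟨x_t, r_t⟩
    (grad : ℕ → Fin N → ℝ)
    (hgrad : ∀ t i, grad t i = -(r t i) / ∑ j, x t j * r t j)
    -- the matrices A_t
    (A : ℕ → Matrix (Fin N) (Fin N) ℝ)
    (hA0 : A 0 = (N : ℝ) • (1 : Matrix (Fin N) (Fin N) ℝ))
    (hA : ∀ t ∈ Finset.Icc 1 T, ∀ i j, A t i j = A (t - 1) i j + grad t i * grad t j)
    -- the individual learning rates η_{t,i}
    (eta : ℕ → Fin N → ℝ)
    (heta : ∀ t ∈ Finset.Icc 1 T, ∀ i,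
        eta t i = η * Real.exp (⨆ s ∈ Finset.Icc 1 t,
          Real.log (1 / ((N : ℝ) * x s i)) / Real.log T))
    -- the regularizer ψ_t, its gradient, and its Bregman divergence
    (psi : ℕ → (Fin N → ℝ) → ℝ)
    (hpsi : ∀ t p, psi t p =
        β / 2 * ∑ i, ∑ j, p i * A t i j * p j + ∑ i, (1 / eta t i) * Real.log (1 / p i))
    (gpsi : ℕ → (Fin N → ℝ) → Fin N → ℝ)
    (hgpsi : ∀ t p i, gpsi t p i = β * (∑ j, A t i j * p j) - (1 / eta t i) * (1 / p i))
    (D : ℕ → (Fin N → ℝ) → (Fin N → ℝ) → ℝ)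
    (hD : ∀ t p q, D t p q = psi t p - psi t q - ∑ i, gpsi t q i * (p i - q i))
    -- x_{t+1} minimizes ⟨x, ∇_t⟩ + D_{ψ_t}(x, x_t) over Δ̄_N
    (hmin : ∀ t ∈ Finset.Icc 1 T, ∀ y : Fin N → ℝ,
        ((∀ i, 0 ≤ y i) ∧ (∑ i, y i) = 1 ∧ ∀ i, 1 / ((N : ℝ) * T) ≤ y i) →
        (∑ i, x (t + 1) i * grad t i) + D t (x (t + 1)) (x t)
          ≤ (∑ i, y i * grad t i) + D t y (x t))
    :
    ∑ t ∈ Finset.Icc 1 T, ∑ i, grad t i * (x t i - x (t + 1) i)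
      ≤ 8 * N * Real.log T / β := by
  have hN0 : (0 : ℝ) < N := by exact_mod_cast (by omega : 0 < N)
  have hT3 : (3 : ℝ) ≤ T := by exact_mod_cast (by omega : 3 ≤ T)
  have hT0 : (0 : ℝ) < T := by linarith
  have hNT : 0 < 1 / ((N : ℝ) * T) := by positivity
  have : Nonempty (Fin N) := ⟨⟨0, by omega⟩⟩
  have hstep (t : ℕ) (ht : t ∈ Finset.Icc 1 T) :
      A t = A (t - 1) + vecMulVec (grad t) (grad t) := by
    ext i j
    simp [hA t ht i j, vecMulVec_apply]
  have hpos (t : ℕ) : t ≤ T → (A t).PosDef := by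
    induction t with
    | zero => intro _; rw [hA0]; exact PosDef.one.smul hN0
    | succ t ih =>
      intro ht
      rw [hstep (t + 1) (Finset.mem_Icc.mpr ⟨by omega, ht⟩), Nat.add_sub_cancel]
      exact (ih (by omega)).add_posSemidef (by
        simpa using posSemidef_vecMulVec_self_star (grad (t + 1)))
  have hround (t : ℕ) (ht : t ∈ Finset.Icc 1 T) :
      ∑ i, grad t i * (x t i - x (t + 1) i) ≤
        2 / β * (Real.log (A t).det - Real.log (A (t - 1)).det) := by
    obtain ⟨ht1, htT⟩ := Finset.mem_Icc.mp ht
    have hxt := hxmem t (Finset.mem_Icc.mpr ⟨ht1, by omega⟩)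
    have hxt' := hxmem (t + 1) (Finset.mem_Icc.mpr ⟨by omega, by omega⟩)
    have hAt := hpos t htT
    have hbreg := quadratic_le_bregman_log_barrier (β := β) (a := fun i => 1 / eta t i)
      (by simpa using hAt.isHermitian.eq)
      (fun i => by rw [heta t ht i]; positivity)
      (fun i => hNT.trans_le (hxt'.2.2 i)) (fun i => hNT.trans_le (hxt.2.2 i))
    have hopt := hmin t ht (x t) hxt
    simp only [hD, hpsi, hgpsi, sub_self, mul_zero, Finset.sum_const_zero, add_zero] at hopt
    have hdot : ∑ i, grad t i * (x t i - x (t + 1) i) = grad t ⬝ᵥ (x t - x (t + 1)) := rfl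
    have hsplit : ∑ i, grad t i * (x t i - x (t + 1) i) =
        ∑ i, x t i * grad t i - ∑ i, x (t + 1) i * grad t i := by
      rw [← Finset.sum_sub_distrib]
      exact Finset.sum_congr rfl fun i _ => by ring
    have hpot := rankOne_update_le_log_det_sub hAt (hpos (t - 1) (by omega)) (grad t)
      (x t - x (t + 1)) (β / 2) (hstep t ht)
    rw [← hdot] at hpot
    rw [div_mul_eq_mul_div, le_div_iff₀ hβ0]
    nlinarith
  have htrace (t : ℕ) : t ≤ T → (A t).trace ≤ (N : ℝ) ^ 2 * (1 + t * (T : ℝ) ^ 2) := by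
    induction t with
    | zero => intro _; rw [hA0]; simp [sq]
    | succ t ih =>
      intro ht
      have hmem : t + 1 ∈ Finset.Icc 1 T := Finset.mem_Icc.mpr ⟨by omega, ht⟩
      obtain ⟨hr0, ⟨k, hk⟩, -⟩ := hr (t + 1) hmem
      have hg := sum_sq_log_loss_grad_le hNT
        (hxmem (t + 1) (Finset.mem_Icc.mpr ⟨by omega, by omega⟩)).2.2 hr0 ⟨k, by simp [hk]⟩
      simp only [← hgrad, one_div_one_div] at hg
      have hvec : (vecMulVec (grad (t + 1)) (grad (t + 1))).trace = ∑ i, grad (t + 1) i ^ 2 := by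
        simp [trace, vecMulVec_apply, sq]
      rw [hstep (t + 1) hmem, Nat.add_sub_cancel, trace_add, hvec]
      have := ih (by omega)
      push_cast
      nlinarith
  have htel : ∑ t ∈ Finset.Icc 1 T, (Real.log (A t).det - Real.log (A (t - 1)).det) =
      Real.log (A T).det - Real.log (A 0).det := by
    rw [← Finset.sum_range_sub (fun t => Real.log (A t).det) T, ← Finset.Ico_add_one_right_eq_Icc,
      Finset.sum_Ico_eq_sum_range]
    simp [add_comm 1]
  have hdet0 : Real.log (A 0).det = N * Real.log N := by
    rw [hA0]
    simp
  have hdetT : Real.log (A T).det ≤ N * (Real.log N + 4 * Real.log T) := by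
    refine (hpos T le_rfl).log_det_le.trans ?_
    rw [Fintype.card_fin]
    refine mul_le_mul_of_nonneg_left ?_ hN0.le
    have hbound : (A T).trace / N ≤ N * (T : ℝ) ^ 4 := by
      rw [div_le_iff₀ hN0]
      refine (htrace T le_rfl).trans ?_
      have hT4 : 1 + (T : ℝ) * (T : ℝ) ^ 2 ≤ (T : ℝ) ^ 4 := by
        nlinarith [one_le_pow₀ (n := 3) (by linarith : (1 : ℝ) ≤ T)]
      nlinarith [mul_le_mul_of_nonneg_left hT4 (sq_nonneg (N : ℝ))]
    refine (Real.log_le_log (div_pos (hpos T le_rfl).trace_pos hN0) hbound).trans_eq ?_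
    rw [Real.log_mul hN0.ne' (by positivity), Real.log_pow]
    norm_num
  calc ∑ t ∈ Finset.Icc 1 T, ∑ i, grad t i * (x t i - x (t + 1) i)
      ≤ ∑ t ∈ Finset.Icc 1 T, 2 / β * (Real.log (A t).det - Real.log (A (t - 1)).det) :=
        Finset.sum_le_sum hround
    _ = 2 / β * (Real.log (A T).det - Real.log (A 0).det) := by rw [← Finset.mul_sum, htel]
    _ ≤ 2 / β * (4 * N * Real.log T) := by
        refine mul_le_mul_of_nonneg_left ?_ (by positivity)
        linarith
    _ = 8 * N * Real.log T / β := by ring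
end

section
/- Let the BARRONS iterates x_1, …, x_T be as in the context with parameters 0 < β ≤ 1/2 and 0 < η ≤ 1. Then for every t ∈ [T], ⟨∇_t, x_t − x_{t+1}⟩ ≤ (2/β)·∇_tᵀ A_t^{−1} ∇_t. -/
open Matrix in
/-- If `β / 2 * dᵀ A d ≤ ⟨g, d⟩` for a positive definite `A`, then `⟨g, d⟩` is at most
`2 / β` times the squared dual norm of `g`. -/
theorem Matrix.PosDef.dotProduct_le_of_quadratic_le {n : Type*} [Fintype n] [DecidableEq n]
    {A : Matrix n n ℝ} (hA : A.PosDef) {β : ℝ} (hβ : 0 < β) {g d : n → ℝ}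
    (h : β / 2 * (d ⬝ᵥ A *ᵥ d) ≤ g ⬝ᵥ d) :
    g ⬝ᵥ d ≤ 2 / β * (g ⬝ᵥ A⁻¹ *ᵥ g) := by
  have hAw : A *ᵥ (A⁻¹ *ᵥ g) = g := by
    rw [mulVec_mulVec, mul_nonsing_inv A ((isUnit_iff_isUnit_det A).1 hA.isUnit), one_mulVec]
  have hsymm : ∀ u v : n → ℝ, u ⬝ᵥ A *ᵥ v = v ⬝ᵥ A *ᵥ u := fun u v => by
    have hAt : Aᵀ = A := by simpa [conjTranspose_eq_transpose_of_trivial] using hA.isHermitian.eq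
    rw [dotProduct_mulVec, ← mulVec_transpose, hAt, dotProduct_comm]
  have hpos := hA.posSemidef.dotProduct_mulVec_nonneg (β • d - (2 : ℝ) • (A⁻¹ *ᵥ g))
  simp only [star_trivial, mulVec_sub, mulVec_smul, sub_dotProduct, dotProduct_sub,
    smul_dotProduct, dotProduct_smul, smul_eq_mul, hsymm (A⁻¹ *ᵥ g) d, hAw] at hpos
  rw [dotProduct_comm d g, dotProduct_comm (A⁻¹ *ᵥ g) g] at hpos
  rw [div_mul_eq_mul_div, le_div_iff₀ hβ]
  nlinarith [mul_le_mul_of_nonneg_left h hβ.le]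

/-- The Bregman divergence of `p ↦ log (1 / p)` is nonnegative on the positive reals. -/
theorem log_one_div_bregman_nonneg {p q : ℝ} (hp : 0 < p) (hq : 0 < q) :
    0 ≤ Real.log (1 / p) - Real.log (1 / q) + 1 / q * (p - q) := by
  have h := Real.log_le_sub_one_of_pos (div_pos hp hq)
  rw [Real.log_div hp.ne' hq.ne'] at h
  have e : 1 / q * (p - q) = p / q - 1 := by field_simp
  rw [e, one_div, one_div, Real.log_inv, Real.log_inv]
  linarith

open Matrix in
/-- The Bregman divergence of a quadratic form plus a weighted log-barrier is at least that of the
quadratic form. -/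
theorem quadratic_le_bregman_quadratic_add_log_barrier {n : Type*} [Fintype n]
    {A : Matrix n n ℝ} (hA : A.IsHermitian) {β : ℝ} {c p q : n → ℝ} (hc : ∀ i, 0 ≤ c i)
    (hp : ∀ i, 0 < p i) (hq : ∀ i, 0 < q i) :
    β / 2 * ((q - p) ⬝ᵥ A *ᵥ (q - p)) ≤
      (β / 2 * (p ⬝ᵥ A *ᵥ p) + ∑ i, c i * Real.log (1 / p i))
        - (β / 2 * (q ⬝ᵥ A *ᵥ q) + ∑ i, c i * Real.log (1 / q i))
        - ∑ i, (β * (A *ᵥ q) i - c i * (1 / q i)) * (p i - q i) := by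
  have hlog : 0 ≤ ∑ i, c i * (Real.log (1 / p i) - Real.log (1 / q i) + 1 / q i * (p i - q i)) :=
    Finset.sum_nonneg fun i _ => mul_nonneg (hc i) (log_one_div_bregman_nonneg (hp i) (hq i))
  have hsplit : ∑ i, (β * (A *ᵥ q) i - c i * (1 / q i)) * (p i - q i) =
      β * (p ⬝ᵥ A *ᵥ q - q ⬝ᵥ A *ᵥ q) - ∑ i, c i * (1 / q i * (p i - q i)) := by
    simp only [dotProduct, ← Finset.sum_sub_distrib, Finset.mul_sum]
    exact Finset.sum_congr rfl fun i _ => by ring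
  have hsymm : q ⬝ᵥ A *ᵥ p = p ⬝ᵥ A *ᵥ q := by
    have hAt : Aᵀ = A := by simpa [conjTranspose_eq_transpose_of_trivial] using hA.eq
    rw [dotProduct_mulVec, ← mulVec_transpose, hAt, dotProduct_comm]
  rw [hsplit]
  simp only [mul_add, mul_sub, Finset.sum_add_distrib, Finset.sum_sub_distrib, mulVec_sub,
    sub_dotProduct, dotProduct_sub, hsymm] at hlog ⊢
  linarith

open Matrix in
/-- Rank-one updates of a positive multiple of the identity stay positive definite. -/
theorem Matrix.posDef_of_rank_one_updates {n : Type*} [Fintype n] [DecidableEq n] {c : ℝ}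
    (hc : 0 < c) {T : ℕ} {A : ℕ → Matrix n n ℝ} {g : ℕ → n → ℝ} (hA0 : A 0 = c • 1)
    (hA : ∀ t ∈ Finset.Icc 1 T, ∀ i j, A t i j = A (t - 1) i j + g t i * g t j) :
    ∀ t ≤ T, (A t).PosDef := by
  intro t
  induction t with
  | zero => exact fun _ => hA0 ▸ PosDef.one.smul hc
  | succ k ih =>
    intro hk
    have hstep : A (k + 1) = A k + vecMulVec (g (k + 1)) (star (g (k + 1))) := by
      ext i j
      simpa [vecMulVec_apply] using hA (k + 1) (Finset.mem_Icc.2 ⟨by omega, hk⟩) i j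
    rw [hstep]
    exact (ih (by omega)).add_posSemidef (posSemidef_vecMulVec_self_star _)


/- STATEMENT 4: per-round bound ⟨∇_t, x_t - x_{t+1}⟩ ≤ (2/β)·∇_tᵀ A_t⁻¹ ∇_t. -/

theorem barrons_per_round_linear_term
    (N T : ℕ) (hN : 2 ≤ N) (hT : N < T)
    (β η : ℝ) (hβ0 : 0 < β) (hβ : β ≤ 1 / 2) (hη0 : 0 < η) (hη : η ≤ 1)
    -- reward vectors: nonnegative with maximum coordinate equal to 1
    (r : ℕ → Fin N → ℝ)
    (hr : ∀ t ∈ Finset.Icc 1 T, (∀ i, 0 ≤ r t i) ∧ (∃ i, r t i = 1) ∧ ∀ i, r t i ≤ 1)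
    -- the iterates x_1, ..., x_{T+1}
    (x : ℕ → Fin N → ℝ)
    (hx1 : ∀ i, x 1 i = 1 / N)
    (hxmem : ∀ t ∈ Finset.Icc 1 (T + 1),
        (∀ i, 0 ≤ x t i) ∧ (∑ i, x t i) = 1 ∧ ∀ i, 1 / ((N : ℝ) * T) ≤ x t i)
    -- the gradients ∇_t = -r_t / ⟨x_t, r_t⟩
    (grad : ℕ → Fin N → ℝ)
    (hgrad : ∀ t i, grad t i = -(r t i) / ∑ j, x t j * r t j)
    -- the matrices A_t
    (A : ℕ → Matrix (Fin N) (Fin N) ℝ)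
    (hA0 : A 0 = (N : ℝ) • (1 : Matrix (Fin N) (Fin N) ℝ))
    (hA : ∀ t ∈ Finset.Icc 1 T, ∀ i j, A t i j = A (t - 1) i j + grad t i * grad t j)
    -- the individual learning rates η_{t,i}
    (eta : ℕ → Fin N → ℝ)
    (heta : ∀ t ∈ Finset.Icc 1 T, ∀ i,
        eta t i = η * Real.exp (⨆ s ∈ Finset.Icc 1 t,
          Real.log (1 / ((N : ℝ) * x s i)) / Real.log T))
    -- the regularizer ψ_t, its gradient, and its Bregman divergence
    (psi : ℕ → (Fin N → ℝ) → ℝ)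
    (hpsi : ∀ t p, psi t p =
        β / 2 * ∑ i, ∑ j, p i * A t i j * p j + ∑ i, (1 / eta t i) * Real.log (1 / p i))
    (gpsi : ℕ → (Fin N → ℝ) → Fin N → ℝ)
    (hgpsi : ∀ t p i, gpsi t p i = β * (∑ j, A t i j * p j) - (1 / eta t i) * (1 / p i))
    (D : ℕ → (Fin N → ℝ) → (Fin N → ℝ) → ℝ)
    (hD : ∀ t p q, D t p q = psi t p - psi t q - ∑ i, gpsi t q i * (p i - q i))
    -- x_{t+1} minimizes ⟨x, ∇_t⟩ + D_{ψ_t}(x, x_t) over Δ̄_N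
    (hmin : ∀ t ∈ Finset.Icc 1 T, ∀ y : Fin N → ℝ,
        ((∀ i, 0 ≤ y i) ∧ (∑ i, y i) = 1 ∧ ∀ i, 1 / ((N : ℝ) * T) ≤ y i) →
        (∑ i, x (t + 1) i * grad t i) + D t (x (t + 1)) (x t)
          ≤ (∑ i, y i * grad t i) + D t y (x t))
    :
    ∀ t ∈ Finset.Icc 1 T,
      ∑ i, grad t i * (x t i - x (t + 1) i)
        ≤ (2 / β) * ∑ i, ∑ j, grad t i * (A t)⁻¹ i j * grad t j := by
  intro t ht
  obtain ⟨ht1, htT⟩ := Finset.mem_Icc.1 ht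
  have hNT : 0 < 1 / ((N : ℝ) * T) := by
    have hN0 : (0 : ℝ) < N := by exact_mod_cast (by omega : 0 < N)
    have hT0 : (0 : ℝ) < T := by exact_mod_cast (by omega : 0 < T)
    positivity
  have hxt := hxmem t (Finset.mem_Icc.2 ⟨ht1, by omega⟩)
  have hxs := hxmem (t + 1) (Finset.mem_Icc.2 ⟨by omega, by omega⟩)
  have hPD : (A t).PosDef := Matrix.posDef_of_rank_one_updates
    (by exact_mod_cast (by omega : 0 < N)) hA0 hA t htT
  have hform : ∀ (M : Matrix (Fin N) (Fin N) ℝ) (p : Fin N → ℝ),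
      ∑ i, ∑ j, p i * M i j * p j = p ⬝ᵥ M.mulVec p := fun M p => by
    simp only [dotProduct, Matrix.mulVec, Finset.mul_sum, mul_assoc]
  have hbreg := quadratic_le_bregman_quadratic_add_log_barrier (β := β) hPD.isHermitian
    (c := fun i => 1 / eta t i) (fun i => by rw [heta t ht i]; positivity)
    (fun i => hNT.trans_le (hxs.2.2 i)) (fun i => hNT.trans_le (hxt.2.2 i))
  have hopt := hmin t ht (x t) hxt
  have hself : D t (x t) (x t) = 0 := by simp [hD]
  have hlin : grad t ⬝ᵥ (x t - x (t + 1)) =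
      ∑ i, x t i * grad t i - ∑ i, x (t + 1) i * grad t i := by
    rw [dotProduct_comm, sub_dotProduct]
    rfl
  have hDx := hD t (x (t + 1)) (x t)
  simp only [hpsi, hgpsi, hform] at hDx
  rw [hform]
  refine hPD.dotProduct_le_of_quadratic_le hβ0 (hbreg.trans (le_of_le_of_eq ?_ hlin.symm))
  simp only [Matrix.mulVec, dotProduct] at hDx ⊢
  linarith
end

section
/- Let the BARRONS iterates x_1, …, x_T be as in the context with parameters 0 < β ≤ 1/2 and 0 < η ≤ 1/300. Then for every t ∈ [T−1] and every i ∈ [N], 1 − √(3η)/2 ≤ x_{t+1,i}/x_{t,i} ≤ 1 + √(3η)/2. -/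
/-- Lower bound for `v ↦ v ^ 2 / (1 + v)` by a linear function with small offset. -/
theorem mul_sub_sq_div_one_add_le {b c p v : ℝ} (hb : 0 < b) (hb1 : b ≤ 1) (hc : 1 / b ≤ c)
    (hp : 0 ≤ p) (hp1 : p ≤ 1) (hv : 0 < 1 + v) :
    p * v - c * (v ^ 2 / (1 + v)) ≤ p * b := by
  have hq : 0 ≤ v ^ 2 / (1 + v) := by positivity
  have hcq : 1 / b * (v ^ 2 / (1 + v)) ≤ c * (v ^ 2 / (1 + v)) :=
    mul_le_mul_of_nonneg_right hc hq
  rcases le_or_gt v 0 with h | h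
  · have h1 : 0 ≤ 1 / b * (v ^ 2 / (1 + v)) := by positivity
    nlinarith [mul_nonneg hp (neg_nonneg.2 h), mul_nonneg hp hb.le]
  · have key : b * p * v - b * p * b ≤ v ^ 2 / (1 + v) := by
      rw [le_div_iff₀ hv]
      have hs : b * p ≤ 1 := by nlinarith
      nlinarith [sq_nonneg (v - b * p * (1 + v)), mul_nonneg hp hb.le,
        mul_nonneg (mul_nonneg hp hb.le) (mul_nonneg h.le hv.le),
        mul_nonneg (mul_nonneg (mul_nonneg hp hb.le) (mul_nonneg h.le hv.le)) (sub_nonneg.2 hs),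
        mul_nonneg (mul_nonneg (mul_nonneg hb.le hb.le) (mul_nonneg hp (sub_nonneg.2 hp1)))
          (sq_nonneg (1 + v))]
    have h2 : 1 / b * (b * p * v - b * p * b) ≤ 1 / b * (v ^ 2 / (1 + v)) :=
      mul_le_mul_of_nonneg_left key (by positivity)
    have h3 : 1 / b * (b * p * v - b * p * b) = p * v - p * b := by field_simp
    linarith

/-- If a weighted sum of `v i ^ 2 / (1 + v i)` with large weights is bounded by an average of
the `v i`, then every `v i` is small. -/
theorem abs_le_of_sum_sq_div_one_add_le {ι : Type*} [Fintype ι] {b : ℝ} (hb : 0 < b)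
    (hb1 : b ≤ 1 / 100) {c p v : ι → ℝ} (hc : ∀ i, 1 / b ≤ c i) (hp : ∀ i, 0 ≤ p i)
    (hp1 : ∑ i, p i = 1) (hv : ∀ i, 0 < 1 + v i)
    (h : ∑ i, c i * (v i ^ 2 / (1 + v i)) ≤ ∑ i, p i * v i) (j : ι) :
    |v j| ≤ 2 * b := by
  classical
  have hple : ∀ i, p i ≤ 1 := fun i => hp1 ▸
    Finset.single_le_sum (f := p) (fun k _ => hp k) (Finset.mem_univ i)
  have hrest : ∑ i ∈ Finset.univ.erase j, (p i * v i - c i * (v i ^ 2 / (1 + v i))) ≤ b := by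
    calc _ ≤ ∑ i ∈ Finset.univ.erase j, p i * b := Finset.sum_le_sum fun i _ =>
          mul_sub_sq_div_one_add_le hb (by linarith) (hc i) (hp i) (hple i) (hv i)
      _ ≤ ∑ i, p i * b := Finset.sum_le_sum_of_subset_of_nonneg (Finset.erase_subset _ _)
          fun i _ _ => mul_nonneg (hp i) hb.le
      _ = b := by rw [← Finset.sum_mul, hp1, one_mul]
  have htot := Finset.add_sum_erase Finset.univ
    (fun i => p i * v i - c i * (v i ^ 2 / (1 + v i))) (Finset.mem_univ j)
  simp only [Finset.sum_sub_distrib] at htot hrest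
  have hj : c j * (v j ^ 2 / (1 + v j)) ≤ p j * v j + b := by linarith
  have hq : 0 ≤ v j ^ 2 / (1 + v j) := div_nonneg (sq_nonneg _) (hv j).le
  have hj2 : 1 / b * (v j ^ 2 / (1 + v j)) ≤ p j * v j + b :=
    (mul_le_mul_of_nonneg_right (hc j) hq).trans hj
  have hj3 : v j ^ 2 ≤ b * (p j * v j + b) * (1 + v j) := by
    rw [← div_le_iff₀ (hv j)]
    have := mul_le_mul_of_nonneg_left hj2 hb.le
    rwa [← mul_assoc, mul_one_div_cancel hb.ne', one_mul] at this
  have hvj := hv j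
  rcases le_or_gt (v j) 0 with h0 | h0
  · have h4 : v j ^ 2 ≤ b ^ 2 := by
      have h5 : b * (p j * v j + b) * (1 + v j) ≤ b * b * (1 + v j) := by
        have : p j * v j ≤ 0 := mul_nonpos_of_nonneg_of_nonpos (hp j) h0
        gcongr
        linarith
      nlinarith [mul_nonneg (mul_nonneg hb.le hb.le) (neg_nonneg.2 h0)]
    exact (abs_le_of_sq_le_sq h4 hb.le).trans (by linarith)
  · rw [abs_of_pos h0]
    by_contra! hcon
    have h5 : b * (p j * v j + b) * (1 + v j) ≤ b * (v j + b) * (1 + v j) := by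
      have : p j * v j ≤ 1 * v j := mul_le_mul_of_nonneg_right (hple j) h0.le
      gcongr
      linarith
    nlinarith [mul_pos hb h0, mul_pos h0 h0, mul_pos hb hb, mul_pos (mul_pos hb h0) h0,
      mul_nonneg (mul_pos h0 h0).le (sub_nonneg.2 hb1), mul_pos h0 (sub_pos.2 hcon),
      mul_pos hb (sub_pos.2 hcon), mul_nonneg (mul_pos hb h0).le (sub_nonneg.2 hb1)]

/-- Second-order expansion of a symmetric quadratic form along `x`, `x + e`, `x + 2e`. -/
theorem quadForm_three_point {ι : Type*} [Fintype ι] {A : Matrix ι ι ℝ}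
    (hA : ∀ i j, A i j = A j i) (x e : ι → ℝ) (β : ℝ) :
    β / 2 * ∑ i, ∑ j, (x i + 2 * e i) * A i j * (x j + 2 * e j)
        - β / 2 * ∑ i, ∑ j, (x i + e i) * A i j * (x j + e j)
        - ∑ i, β * (∑ j, A i j * x j) * e i
      = 3 * β / 2 * ∑ i, ∑ j, e i * A i j * e j := by
  have hcomm : ∑ i, ∑ j, x i * A i j * e j = ∑ i, ∑ j, e i * A i j * x j := by
    rw [Finset.sum_comm]
    refine Finset.sum_congr rfl fun i _ => Finset.sum_congr rfl fun j _ => ?_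
    rw [hA j i]; ring
  have h (s : ℝ) : ∑ i, ∑ j, (x i + s * e i) * A i j * (x j + s * e j)
      = (∑ i, ∑ j, x i * A i j * x j) + s * (∑ i, ∑ j, x i * A i j * e j)
        + s * (∑ i, ∑ j, e i * A i j * x j) + s ^ 2 * ∑ i, ∑ j, e i * A i j * e j := by
    simp only [Finset.mul_sum, ← Finset.sum_add_distrib]
    refine Finset.sum_congr rfl fun i _ => Finset.sum_congr rfl fun j _ => ?_
    ring
  have h1 := h 1
  simp only [one_mul] at h1
  have hlin : ∑ i, β * (∑ j, A i j * x j) * e i = β * ∑ i, ∑ j, e i * A i j * x j := by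
    simp only [Finset.mul_sum, Finset.sum_mul]
    refine Finset.sum_congr rfl fun i _ => Finset.sum_congr rfl fun j _ => ?_
    ring
  rw [h 2, h1, hlin, hcomm]
  ring

/-- Rank-one updates of a nonnegative multiple of the identity are symmetric and positive
semidefinite. -/
theorem rankOne_updates_symm_nonneg {ι : Type*} [Fintype ι] [DecidableEq ι] {T : ℕ} {a : ℝ}
    (ha : 0 ≤ a) {A : ℕ → Matrix ι ι ℝ} {g : ℕ → ι → ℝ} (hA0 : A 0 = a • (1 : Matrix ι ι ℝ))
    (hA : ∀ t ∈ Finset.Icc 1 T, ∀ i j, A t i j = A (t - 1) i j + g t i * g t j)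
    {t : ℕ} (ht : t ≤ T) :
    (∀ i j, A t i j = A t j i) ∧ ∀ v : ι → ℝ, 0 ≤ ∑ i, ∑ j, v i * A t i j * v j := by
  induction t with
  | zero =>
    rw [hA0]
    refine ⟨fun i j => by simp [Matrix.one_apply, eq_comm], fun v => ?_⟩
    refine Finset.sum_nonneg fun i _ => Finset.sum_nonneg fun j _ => ?_
    by_cases hij : i = j
    · subst hij
      simp only [Matrix.smul_apply, Matrix.one_apply_eq, smul_eq_mul, mul_one]
      nlinarith [mul_nonneg ha (sq_nonneg (v i))]
    · simp [Matrix.one_apply_ne hij]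
  | succ t ih =>
    obtain ⟨hs, hn⟩ := ih (by omega)
    have hstep := hA (t + 1) (Finset.mem_Icc.2 ⟨by omega, ht⟩)
    simp only [Nat.add_sub_cancel] at hstep
    refine ⟨fun i j => by rw [hstep, hstep, hs i j, mul_comm (g _ i)], fun v => ?_⟩
    have heq : ∑ i, ∑ j, v i * A (t + 1) i j * v j
        = (∑ i, ∑ j, v i * A t i j * v j) + (∑ i, v i * g (t + 1) i) ^ 2 := by
      rw [sq, Finset.sum_mul_sum, ← Finset.sum_add_distrib]
      refine Finset.sum_congr rfl fun i _ => ?_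
      rw [← Finset.sum_add_distrib]
      refine Finset.sum_congr rfl fun j _ => ?_
      rw [hstep]; ring
    rw [heq]
    exact add_nonneg (hn v) (sq_nonneg _)

/-- The exponential of the supremum of quantities bounded by one is at most three. -/
theorem exp_biSup_le_three {s : Finset ℕ} {f : ℕ → ℝ} (hf : ∀ k ∈ s, f k ≤ 1) :
    Real.exp (⨆ k ∈ s, f k) ≤ 3 := by
  have hle : (⨆ k ∈ s, f k) ≤ 1 :=
    Real.iSup_le (fun k => Real.iSup_le (fun hk => hf k hk) zero_le_one) zero_le_one
  exact (Real.exp_le_exp.2 hle).trans (by linarith [Real.exp_one_lt_d9])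

/- STATEMENT 5: Lemma 7 of the paper, multiplicative stability of the BARRONS iterates. -/

theorem barrons_stability
    (N T : ℕ) (hN : 2 ≤ N) (hT : N < T)
    (β η : ℝ) (hβ0 : 0 < β) (hβ : β ≤ 1 / 2) (hη0 : 0 < η) (hη : η ≤ 1 / 300)
    -- reward vectors: nonnegative with maximum coordinate equal to 1
    (r : ℕ → Fin N → ℝ)
    (hr : ∀ t ∈ Finset.Icc 1 T, (∀ i, 0 ≤ r t i) ∧ (∃ i, r t i = 1) ∧ ∀ i, r t i ≤ 1)
    -- the iterates x_1, ..., x_{T+1}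
    (x : ℕ → Fin N → ℝ)
    (hx1 : ∀ i, x 1 i = 1 / N)
    (hxmem : ∀ t ∈ Finset.Icc 1 (T + 1),
        (∀ i, 0 ≤ x t i) ∧ (∑ i, x t i) = 1 ∧ ∀ i, 1 / ((N : ℝ) * T) ≤ x t i)
    -- the gradients ∇_t = -r_t / ⟨x_t, r_t⟩
    (grad : ℕ → Fin N → ℝ)
    (hgrad : ∀ t i, grad t i = -(r t i) / ∑ j, x t j * r t j)
    -- the matrices A_t
    (A : ℕ → Matrix (Fin N) (Fin N) ℝ)
    (hA0 : A 0 = (N : ℝ) • (1 : Matrix (Fin N) (Fin N) ℝ))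
    (hA : ∀ t ∈ Finset.Icc 1 T, ∀ i j, A t i j = A (t - 1) i j + grad t i * grad t j)
    -- the individual learning rates η_{t,i}
    (eta : ℕ → Fin N → ℝ)
    (heta : ∀ t ∈ Finset.Icc 1 T, ∀ i,
        eta t i = η * Real.exp (⨆ s ∈ Finset.Icc 1 t,
          Real.log (1 / ((N : ℝ) * x s i)) / Real.log T))
    -- the regularizer ψ_t, its gradient, and its Bregman divergence
    (psi : ℕ → (Fin N → ℝ) → ℝ)
    (hpsi : ∀ t p, psi t p =
        β / 2 * ∑ i, ∑ j, p i * A t i j * p j + ∑ i, (1 / eta t i) * Real.log (1 / p i))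
    (gpsi : ℕ → (Fin N → ℝ) → Fin N → ℝ)
    (hgpsi : ∀ t p i, gpsi t p i = β * (∑ j, A t i j * p j) - (1 / eta t i) * (1 / p i))
    (D : ℕ → (Fin N → ℝ) → (Fin N → ℝ) → ℝ)
    (hD : ∀ t p q, D t p q = psi t p - psi t q - ∑ i, gpsi t q i * (p i - q i))
    -- x_{t+1} minimizes ⟨x, ∇_t⟩ + D_{ψ_t}(x, x_t) over Δ̄_N
    (hmin : ∀ t ∈ Finset.Icc 1 T, ∀ y : Fin N → ℝ,
        ((∀ i, 0 ≤ y i) ∧ (∑ i, y i) = 1 ∧ ∀ i, 1 / ((N : ℝ) * T) ≤ y i) →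
        (∑ i, x (t + 1) i * grad t i) + D t (x (t + 1)) (x t)
          ≤ (∑ i, y i * grad t i) + D t y (x t))
    :
    ∀ t ∈ Finset.Icc 1 (T - 1), ∀ i,
      1 - Real.sqrt (3 * η) / 2 ≤ x (t + 1) i / x t i ∧
        x (t + 1) i / x t i ≤ 1 + Real.sqrt (3 * η) / 2 := by
  intro t ht
  obtain ⟨ht1, ht2⟩ := Finset.mem_Icc.1 ht
  have htT : t ∈ Finset.Icc 1 T := Finset.mem_Icc.2 ⟨ht1, by omega⟩
  have hN0 : (0 : ℝ) < N := by exact_mod_cast (by omega : 0 < N)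
  have hT1 : (1 : ℝ) < T := by exact_mod_cast (by omega : 1 < T)
  have hlow : (0 : ℝ) < 1 / ((N : ℝ) * T) := by positivity
  have hpos : ∀ s ∈ Finset.Icc 1 (T + 1), ∀ i, 0 < x s i :=
    fun s hs i => hlow.trans_le ((hxmem s hs).2.2 i)
  have ht' : t ∈ Finset.Icc 1 (T + 1) := Finset.mem_Icc.2 ⟨ht1, by omega⟩
  have ht1' : t + 1 ∈ Finset.Icc 1 (T + 1) := Finset.mem_Icc.2 ⟨by omega, by omega⟩
  have hxp := hpos t ht'
  have hyp := hpos (t + 1) ht1'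
  obtain ⟨-, hxs, hxl⟩ := hxmem t ht'
  obtain ⟨-, hys, hyl⟩ := hxmem (t + 1) ht1'
  have hetapos : ∀ i, 0 < eta t i := fun i => by rw [heta t htT i]; positivity
  have hetale : ∀ i, eta t i ≤ 3 * η := fun i => by
    rw [heta t htT i, mul_comm 3 η]
    refine mul_le_mul_of_nonneg_left (exp_biSup_le_three fun s hs => ?_) hη0.le
    obtain ⟨hs1, hs2⟩ := Finset.mem_Icc.1 hs
    have hs' : s ∈ Finset.Icc 1 (T + 1) := Finset.mem_Icc.2 ⟨hs1, by omega⟩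
    have hxs0 := hpos s hs' i
    rw [div_le_one (Real.log_pos hT1)]
    refine Real.log_le_log (by positivity) ?_
    have hl := (hxmem s hs').2.2 i
    rw [div_le_iff₀ (by positivity)] at hl ⊢
    linarith
  obtain ⟨hsymm, hnonneg⟩ := rankOne_updates_symm_nonneg hN0.le hA0 hA (t := t) (by omega)
  obtain ⟨hr0, ⟨k, hk⟩, -⟩ := hr t htT
  have hS : 0 < ∑ j, x t j * r t j :=
    Finset.sum_pos' (fun j _ => mul_nonneg (hxp j).le (hr0 j))
      ⟨k, Finset.mem_univ k, by rw [hk, mul_one]; exact hxp k⟩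
  set S := ∑ j, x t j * r t j with hSdef
  -- half of the step, so that `x t + e` is the midpoint of `x t` and `x (t + 1)`
  set e : Fin N → ℝ := fun i => (x (t + 1) i - x t i) / 2 with he
  have hy : ∀ i, x (t + 1) i = x t i + 2 * e i := fun i => by simp only [he]; ring
  have hmid : ∀ i, 0 < x t i + e i := fun i => by
    have h1 := hxp i
    have h2 := hyp i
    simp only [he]; linarith
  have hmin' := hmin t htT (fun i => x t i + e i) ⟨fun i => (hmid i).le, by
      have : ∑ i, (x t i + e i) = ((∑ i, x t i) + ∑ i, x (t + 1) i) / 2 := by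
        rw [← Finset.sum_add_distrib, Finset.sum_div]
        exact Finset.sum_congr rfl fun i _ => by simp only [he]; ring
      rw [this, hxs, hys]; norm_num, fun i => by
      have h1 := hxl i
      have h2 := hyl i
      simp only [he]; linarith⟩
  have hquad := quadForm_three_point hsymm (x t) e β
  have hlog : ∑ i, (1 / eta t i) * (-(e i) / (x t i + e i))
      ≤ ∑ i, (1 / eta t i) * Real.log (1 / (x t i + 2 * e i))
        - ∑ i, (1 / eta t i) * Real.log (1 / (x t i + e i)) := by
    rw [← Finset.sum_sub_distrib]
    refine Finset.sum_le_sum fun i _ => ?_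
    rw [← mul_sub]
    refine mul_le_mul_of_nonneg_left ?_ (one_div_pos.2 (hetapos i)).le
    have hm := hmid i
    have hy0 : 0 < x t i + 2 * e i := hy i ▸ hyp i
    have hl := Real.log_le_sub_one_of_pos (div_pos hy0 hm)
    rw [Real.log_div hy0.ne' hm.ne'] at hl
    have heq : (x t i + 2 * e i) / (x t i + e i) - 1 = -(-(e i) / (x t i + e i)) := by
      field_simp; ring
    simp only [one_div, Real.log_inv]
    linarith
  have hkey : ∑ i, (1 / eta t i) * ((e i / x t i) ^ 2 / (1 + e i / x t i))
      ≤ ∑ i, x t i * r t i / S * (e i / x t i) := by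
    have hL : ∑ i, (1 / eta t i) * ((e i / x t i) ^ 2 / (1 + e i / x t i))
        = ∑ i, (1 / eta t i) * (-(e i) / (x t i + e i))
          + ∑ i, (1 / eta t i) * (1 / x t i) * e i := by
      rw [← Finset.sum_add_distrib]
      refine Finset.sum_congr rfl fun i _ => ?_
      have hm := (hmid i).ne'
      have hx0 := (hxp i).ne'
      have h1 : 1 + e i / x t i = (x t i + e i) / x t i := by field_simp
      have h2 := (hetapos i).ne'
      rw [h1]
      field_simp
      ring
    have hR : ∑ i, x t i * r t i / S * (e i / x t i)
        = ∑ i, (x t i + e i) * grad t i - ∑ i, (x t i + 2 * e i) * grad t i := by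
      rw [← Finset.sum_sub_distrib]
      refine Finset.sum_congr rfl fun i _ => ?_
      have hx0 := (hxp i).ne'
      rw [hgrad, ← hSdef]
      field_simp
      ring
    have hG : ∑ i, gpsi t (x t) i * (x t i + 2 * e i - x t i)
        - ∑ i, gpsi t (x t) i * (x t i + e i - x t i)
        = ∑ i, β * (∑ j, A t i j * x t j) * e i - ∑ i, (1 / eta t i) * (1 / x t i) * e i := by
      rw [← Finset.sum_sub_distrib, ← Finset.sum_sub_distrib]
      refine Finset.sum_congr rfl fun i _ => ?_
      rw [hgpsi]; ring
    have hQ := mul_nonneg (by positivity : 0 ≤ 3 * β / 2) (hnonneg e)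
    simp only [hD, hpsi, hy] at hmin'
    linarith
  have hb : 0 < 3 * η := by positivity
  have hbound := abs_le_of_sum_sq_div_one_add_le hb (by linarith)
    (fun i => one_div_le_one_div_of_le (hetapos i) (hetale i))
    (fun i => div_nonneg (mul_nonneg (hxp i).le (hr0 i)) hS.le)
    (by rw [← Finset.sum_div, ← hSdef, div_self hS.ne'])
    (fun i => by
      have h1 : 1 + e i / x t i = (x t i + e i) / x t i := by
        have := (hxp i).ne'
        field_simp
      rw [h1]
      exact div_pos (hmid i) (hxp i)) hkey
  intro i
  have hi := abs_le.1 (hbound i)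
  have hratio : x (t + 1) i / x t i = 1 + 2 * (e i / x t i) := by
    have := (hxp i).ne'
    rw [hy i]; field_simp
  have hsqrt : 10 * (3 * η) ≤ Real.sqrt (3 * η) := Real.le_sqrt_of_sq_le (by nlinarith)
  rw [hratio]
  constructor <;> linarith [hi.1, hi.2]
end

section
/- Let 0 < γ ≤ 1/25, and for each t let u_t be the minimizer over Δ̄_N of u ↦ Σ_{s=1}^t f_s(u) + (1/γ)·Σ_{i=1}^N ln(1/u_i). Then for every t and every i ∈ [N], 1 − √γ/2 ≤ u_{t+1,i}/u_{t,i} ≤ 1 + √γ/2. -/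
/-- A function on `[0, 1)` minimized at `0` has nonnegative derivative there. -/
lemma deriv_nonneg_of_min_at_zero {φ : ℝ → ℝ} {φ' : ℝ} (hφ : HasDerivAt φ φ' 0)
    (hmin : ∀ ε, 0 < ε → ε < 1 → φ 0 ≤ φ ε) : 0 ≤ φ' := by
  refine ge_of_tendsto hφ.tendsto_slope_zero_right ?_
  filter_upwards [Ioo_mem_nhdsGT (zero_lt_one (α := ℝ))] with ε hε
  have h := hmin ε hε.1 hε.2
  rw [zero_add, smul_eq_mul]
  exact mul_nonneg (inv_nonneg.2 hε.1.le) (sub_nonneg.2 h)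

lemma hasDerivAt_neg_log_segment {a b : ℝ} (ha : 0 < a) :
    HasDerivAt (fun ε : ℝ => -Real.log (a + ε * (b - a))) (-(b / a - 1)) 0 := by
  have h : HasDerivAt (fun ε : ℝ => a + ε * (b - a)) (b - a) 0 := by
    simpa using ((hasDerivAt_id (0 : ℝ)).mul_const (b - a)).const_add a
  have hlog := (h.log (by simpa using ha.ne')).fun_neg
  rwa [zero_mul, add_zero, sub_div, div_self ha.ne'] at hlog

/-- First-order optimality of `x` in the direction `y - x` for the log-barrier-regularized
log-loss objective. -/
lemma first_order_optimality {ι κ : Type*} [Fintype ι] (S : Finset κ) (r : κ → ι → ℝ) (c : ℝ)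
    {x y : ι → ℝ} (hx : ∀ i, 0 < x i) (hxr : ∀ s ∈ S, 0 < ∑ i, x i * r s i)
    (hmin : ∀ ε : ℝ, 0 < ε → ε < 1 →
      (∑ s ∈ S, -Real.log (∑ i, x i * r s i)) + c * ∑ i, Real.log (1 / x i)
        ≤ (∑ s ∈ S, -Real.log (∑ i, (x i + ε * (y i - x i)) * r s i))
          + c * ∑ i, Real.log (1 / (x i + ε * (y i - x i)))) :
    (∑ s ∈ S, ((∑ i, y i * r s i) / (∑ i, x i * r s i) - 1)) + c * ∑ i, (y i / x i - 1) ≤ 0 := by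
  have hd := (HasDerivAt.fun_sum fun s hs =>
      hasDerivAt_neg_log_segment (b := ∑ i, y i * r s i) (hxr s hs)).add
    ((HasDerivAt.fun_sum (u := Finset.univ) fun i _ =>
      hasDerivAt_neg_log_segment (b := y i) (hx i)).const_mul c)
  have h := deriv_nonneg_of_min_at_zero hd fun ε h0 h1 => by
    have hlin : ∀ s, ∑ i, (x i + ε * (y i - x i)) * r s i
        = (∑ i, x i * r s i) + ε * ((∑ i, y i * r s i) - ∑ i, x i * r s i) := fun s => by
      rw [← Finset.sum_sub_distrib, Finset.mul_sum, ← Finset.sum_add_distrib]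
      exact Finset.sum_congr rfl fun i _ => by ring
    simpa [hlin] using hmin ε h0 h1
  simp only [Finset.sum_neg_distrib] at h
  linarith

lemma sum_mul_pos_of_ne_zero {ι : Type*} [Fintype ι] {x r : ι → ℝ} (hx : ∀ i, 0 < x i)
    (hr : ∀ i, 0 ≤ r i) (hr0 : r ≠ 0) : 0 < ∑ i, x i * r i := by
  obtain ⟨i, hi⟩ := Function.ne_iff.1 hr0
  exact Finset.sum_pos' (fun j _ => mul_nonneg (hx j).le (hr j))
    ⟨i, Finset.mem_univ i, mul_pos (hx i) ((hr i).lt_of_ne' hi)⟩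

lemma div_add_div_sub_two {a b : ℝ} (ha : 0 < a) (hb : 0 < b) :
    (b / a - 1) + (a / b - 1) = (b - a) ^ 2 / (a * b) := by
  field_simp
  ring

/-- If the symmetrized barrier divergence of `x` and `y` is at most
`γ * (1 - ⟨x, r⟩ / ⟨y, r⟩)`, then all coordinate ratios lie in `[1 - γ, 1 + γ]`. -/
lemma ratio_bounds_of_barrier_divergence_le {ι : Type*} [Fintype ι] [Nonempty ι] {x y r : ι → ℝ} {γ : ℝ}
    (hγ0 : 0 < γ) (hx : ∀ i, 0 < x i) (hy : ∀ i, 0 < y i) (hr : ∀ i, 0 ≤ r i) (hr0 : r ≠ 0)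
    (h : ∑ i, (y i - x i) ^ 2 / (x i * y i)
      ≤ γ * (1 - (∑ i, x i * r i) / (∑ i, y i * r i))) (i : ι) :
    1 - γ ≤ y i / x i ∧ y i / x i ≤ 1 + γ := by
  have hyr := sum_mul_pos_of_ne_zero hy hr hr0
  obtain ⟨j, hj⟩ := Finite.exists_max fun i => y i / x i
  have hle : ∀ k, (y k - x k) ^ 2 / (x k * y k)
      ≤ γ * (1 - (∑ i, x i * r i) / (∑ i, y i * r i)) := fun k =>
    (Finset.single_le_sum (f := fun i => (y i - x i) ^ 2 / (x i * y i))
      (fun i _ => div_nonneg (sq_nonneg _) (mul_pos (hx i) (hy i)).le)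
      (Finset.mem_univ k)).trans h
  have hratio : x j / y j ≤ (∑ i, x i * r i) / (∑ i, y i * r i) := by
    rw [le_div_iff₀ hyr, Finset.mul_sum]
    refine Finset.sum_le_sum fun k _ => ?_
    rw [← mul_assoc]
    refine mul_le_mul_of_nonneg_right ?_ (hr k)
    have := hj k
    rw [div_le_div_iff₀ (hx k) (hx j)] at this
    rw [div_mul_eq_mul_div, div_le_iff₀ (hy j)]
    linarith
  have hle' : ∀ k, (y k - x k) ^ 2 / (x k * y k) ≤ γ * (1 - x j / y j) := fun k =>
    (hle k).trans (mul_le_mul_of_nonneg_left (by linarith) hγ0.le)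
  have hmax : y j / x j ≤ 1 + γ := by
    have hk := hle' j
    rw [one_sub_div (hy j).ne', ← mul_div_assoc, div_le_div_iff₀ (mul_pos (hx j) (hy j)) (hy j)]
      at hk
    rw [div_le_iff₀ (hx j)]
    by_contra! hlt
    have hpos : 0 < y j - x j := by nlinarith [hx j]
    have : 0 < (y j - x j) * y j * (y j - (1 + γ) * x j) :=
      mul_pos (mul_pos hpos (hy j)) (by linarith)
    nlinarith
  refine ⟨?_, (hj i).trans hmax⟩
  have hgap : 1 - x j / y j ≤ γ := by
    rw [div_le_iff₀ (hx j)] at hmax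
    rw [sub_le_iff_le_add, ← sub_le_iff_le_add', le_div_iff₀ (hy j)]
    rcases le_total γ 1 with h1 | h1
    · nlinarith [mul_le_mul_of_nonneg_left hmax (sub_nonneg.2 h1),
        mul_nonneg (sq_nonneg γ) (hx j).le]
    · nlinarith [mul_nonneg (sub_nonneg.2 h1) (hy j).le, hx j]
  have hk := (hle' i).trans (mul_le_mul_of_nonneg_left hgap hγ0.le)
  rw [div_le_iff₀ (mul_pos (hx i) (hy i))] at hk
  rw [le_div_iff₀ (hx i)]
  rcases le_total (x i) (y i) with hxy | hxy
  · nlinarith [mul_pos hγ0 (hx i)]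
  · have hsq : (x i - y i) ^ 2 ≤ (γ * x i) ^ 2 := by
      nlinarith [mul_le_mul_of_nonneg_left hxy (mul_pos (mul_pos hγ0 hγ0) (hx i)).le]
    have := abs_le_of_sq_le_sq' hsq (mul_pos hγ0 (hx i)).le
    linarith [this.2]

/- STATEMENT 6: Lemma 8 of the paper, multiplicative stability of the regularized
   leaders u_t = argmin_{u ∈ Δ̄_N} Σ_{s=1}^t f_s(u) + (1/γ)·Σ_i ln(1/u_i). -/

theorem regularized_leader_stability
    (N T : ℕ) (hN : 2 ≤ N) (hT : N < T)
    (γ : ℝ) (hγ0 : 0 < γ) (hγ : γ ≤ 1 / 25)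
    -- reward vectors: nonnegative and nonzero
    (r : ℕ → Fin N → ℝ)
    (hr : ∀ s, (∀ i, 0 ≤ r s i) ∧ r s ≠ 0)
    -- u_t is the minimizer over Δ̄_N of u ↦ Σ_{s=1}^t (-ln⟨u, r_s⟩) + (1/γ)·Σ_i ln(1/u_i)
    (u : ℕ → Fin N → ℝ)
    (humem : ∀ t, (∀ i, 0 ≤ u t i) ∧ (∑ i, u t i) = 1 ∧ ∀ i, 1 / ((N : ℝ) * T) ≤ u t i)
    (hmin : ∀ t, ∀ v : Fin N → ℝ,
        ((∀ i, 0 ≤ v i) ∧ (∑ i, v i) = 1 ∧ ∀ i, 1 / ((N : ℝ) * T) ≤ v i) →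
        (∑ s ∈ Finset.Icc 1 t, -Real.log (∑ i, u t i * r s i))
            + (1 / γ) * ∑ i, Real.log (1 / u t i)
          ≤ (∑ s ∈ Finset.Icc 1 t, -Real.log (∑ i, v i * r s i))
            + (1 / γ) * ∑ i, Real.log (1 / v i)) :
    ∀ t, ∀ i, 1 - Real.sqrt γ / 2 ≤ u (t + 1) i / u t i ∧
      u (t + 1) i / u t i ≤ 1 + Real.sqrt γ / 2 := by
  intro t i
  have : Nonempty (Fin N) := ⟨i⟩
  have hNT : (0 : ℝ) < 1 / ((N : ℝ) * T) := by
    have h1 : (0 : ℝ) < N := by exact_mod_cast (by omega : 0 < N)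
    have h2 : (0 : ℝ) < T := by exact_mod_cast (by omega : 0 < T)
    positivity
  have hpos : ∀ t i, 0 < u t i := fun t i => hNT.trans_le ((humem t).2.2 i)
  have hur : ∀ t s, 0 < ∑ i, u t i * r s i := fun t s =>
    sum_mul_pos_of_ne_zero (hpos t) (hr s).1 (hr s).2
  have hfoc : ∀ t t', (∑ s ∈ Finset.Icc 1 t, ((∑ i, u t' i * r s i) / (∑ i, u t i * r s i) - 1))
      + (1 / γ) * ∑ i, (u t' i / u t i - 1) ≤ 0 := fun t t' => by
    refine first_order_optimality _ r _ (hpos t) (fun s _ => hur t s) fun ε h0 h1 => ?_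
    have hlow : ∀ i, 1 / ((N : ℝ) * T) ≤ u t i + ε * (u t' i - u t i) := fun i => by
      nlinarith [(humem t).2.2 i, (humem t').2.2 i]
    refine hmin t _ ⟨fun i => hNT.le.trans (hlow i), ?_, hlow⟩
    rw [Finset.sum_add_distrib, ← Finset.mul_sum, Finset.sum_sub_distrib, (humem t).2.1,
      (humem t').2.1]
    ring
  have hold := hfoc t (t + 1)
  have hnew := hfoc (t + 1) t
  rw [Finset.sum_Icc_succ_top (by omega)] at hnew
  have hloss : 0 ≤ (∑ s ∈ Finset.Icc 1 t,
        ((∑ i, u (t + 1) i * r s i) / (∑ i, u t i * r s i) - 1))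
      + ∑ s ∈ Finset.Icc 1 t, ((∑ i, u t i * r s i) / (∑ i, u (t + 1) i * r s i) - 1) := by
    rw [← Finset.sum_add_distrib]
    refine Finset.sum_nonneg fun s _ => ?_
    rw [div_add_div_sub_two (hur t s) (hur (t + 1) s)]
    exact div_nonneg (sq_nonneg _) (mul_pos (hur t s) (hur (t + 1) s)).le
  have hbarrier : (∑ i, (u (t + 1) i / u t i - 1)) + ∑ i, (u t i / u (t + 1) i - 1)
      = ∑ i, (u (t + 1) i - u t i) ^ 2 / (u t i * u (t + 1) i) := by
    rw [← Finset.sum_add_distrib]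
    exact Finset.sum_congr rfl fun i _ => div_add_div_sub_two (hpos t i) (hpos (t + 1) i)
  have hkey : ∑ i, (u (t + 1) i - u t i) ^ 2 / (u t i * u (t + 1) i)
      ≤ γ * (1 - (∑ i, u t i * r (t + 1) i) / (∑ i, u (t + 1) i * r (t + 1) i)) := by
    rw [← hbarrier, ← div_le_iff₀' hγ0, div_eq_mul_one_div, mul_comm, mul_add]
    linarith
  obtain ⟨hlo, hhi⟩ := ratio_bounds_of_barrier_divergence_le hγ0 (hpos t) (hpos (t + 1)) (hr (t + 1)).1
    (hr (t + 1)).2 hkey i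
  have hsqrt : γ ≤ Real.sqrt γ / 2 := by
    have h5 : Real.sqrt γ ≤ 1 / 2 := Real.sqrt_le_iff.2 ⟨by norm_num, by linarith⟩
    nlinarith [Real.mul_self_sqrt hγ0.le, Real.sqrt_nonneg γ]
  constructor <;> linarith
end

section
/- Let u' ∈ Δ_N, let T ≥ 2, and set u = (1 − 1/T)·u' + (1/(NT))·1, which lies in Δ̄_N. If r_1, …, r_T ∈ ℝ^N have nonnegative entries and ⟨u', r_t⟩ > 0 for all t, then Σ_{t=1}^T f_t(u) − Σ_{t=1}^T f_t(u') ≤ 2, i.e., Σ_{t=1}^T ( ln⟨u', r_t⟩ − ln⟨u, r_t⟩ ) ≤ 2. -/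
/-- If `y` retains at least a fraction `1 - 1 / T` of `x`, then `log x - log y ≤ 2 / T`. -/
theorem log_sub_log_le_two_div {T x y : ℝ} (hT : 2 ≤ T) (hx : 0 < x)
    (hxy : (1 - 1 / T) * x ≤ y) : Real.log x - Real.log y ≤ 2 / T := by
  have hT0 : 0 < T := by linarith
  have hT1 : 0 < T - 1 := by linarith
  have hc : 0 < 1 - 1 / T := by
    rw [one_sub_div hT0.ne']
    positivity
  have hlog := Real.log_le_log (mul_pos hc hx) hxy
  rw [Real.log_mul hc.ne' hx.ne'] at hlog
  have hlower := Real.one_sub_inv_le_log_of_pos hc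
  have hinv : (1 - 1 / T)⁻¹ - 1 ≤ 2 / T := by
    have heq : (1 - 1 / T)⁻¹ - 1 = 1 / (T - 1) := by
      rw [one_sub_div hT0.ne']
      field_simp
      ring
    rw [heq, div_le_div_iff₀ hT1 hT0]
    linarith
  linarith

/- STATEMENT 8: Lemma 3 of the paper. Smoothing u' ∈ Δ_N into
   u = (1 - 1/T)·u' + (1/(NT))·1 ∈ Δ̄_N loses at most 2 in total loss. -/

theorem smoothing_loss
    (N T : ℕ) (hN : 2 ≤ N) (hT : N < T)
    (u' : Fin N → ℝ) (hu' : (∀ i, 0 ≤ u' i) ∧ (∑ i, u' i) = 1)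
    (r : ℕ → Fin N → ℝ)
    (hr : ∀ t ∈ Finset.Icc 1 T, ∀ i, 0 ≤ r t i)
    (hpos : ∀ t ∈ Finset.Icc 1 T, 0 < ∑ i, u' i * r t i) :
    -- u = (1 - 1/T)·u' + (1/(NT))·1 lies in Δ̄_N ...
    ((∀ i, 0 ≤ (1 - 1 / (T : ℝ)) * u' i + 1 / ((N : ℝ) * T)) ∧
      (∑ i, ((1 - 1 / (T : ℝ)) * u' i + 1 / ((N : ℝ) * T))) = 1 ∧
      (∀ i, 1 / ((N : ℝ) * T) ≤ (1 - 1 / (T : ℝ)) * u' i + 1 / ((N : ℝ) * T))) ∧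
    -- ... and Σ_t (ln⟨u', r_t⟩ - ln⟨u, r_t⟩) ≤ 2
    ∑ t ∈ Finset.Icc 1 T,
        (Real.log (∑ i, u' i * r t i)
          - Real.log (∑ i, ((1 - 1 / (T : ℝ)) * u' i + 1 / ((N : ℝ) * T)) * r t i)) ≤ 2 := by
  obtain ⟨hu0, hu1⟩ := hu'
  have hN0 : (0 : ℝ) < N := by exact_mod_cast (by omega : 0 < N)
  have hT2 : (2 : ℝ) ≤ T := by exact_mod_cast (by omega : 2 ≤ T)
  have hT0 : (0 : ℝ) < T := by linarith
  have hc : 0 ≤ 1 - 1 / (T : ℝ) := by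
    rw [sub_nonneg, div_le_one hT0]
    linarith
  have hn : 0 ≤ 1 / ((N : ℝ) * T) := by positivity
  have hu : ∀ i, 0 ≤ (1 - 1 / (T : ℝ)) * u' i := fun i => mul_nonneg hc (hu0 i)
  refine ⟨⟨fun i => add_nonneg (hu i) hn, ?_, fun i => le_add_of_nonneg_left (hu i)⟩, ?_⟩
  · rw [Finset.sum_add_distrib, ← Finset.mul_sum, hu1, Finset.sum_const, Finset.card_univ,
      Fintype.card_fin, nsmul_eq_mul]
    field_simp
    ring
  · calc
      _ ≤ ∑ _t ∈ Finset.Icc 1 T, 2 / (T : ℝ) := by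
        refine Finset.sum_le_sum fun t ht => log_sub_log_le_two_div hT2 (hpos t ht) ?_
        rw [Finset.mul_sum]
        refine Finset.sum_le_sum fun i _ => ?_
        rw [add_mul, mul_assoc]
        exact le_add_of_nonneg_right (mul_nonneg hn (hr t ht i))
      _ = 2 := by
        rw [Finset.sum_const, Nat.card_Icc, Nat.add_sub_cancel, nsmul_eq_mul]
        field_simp
end

section
/- Let r ∈ ℝ^N have nonnegative coordinates, let x, u ∈ Δ_N with ⟨x, r⟩ > 0 and ⟨u, r⟩ > 0, set g = −r/⟨x, r⟩, and let 0 < β ≤ 1/2. Then 1 − 2β·⟨g, u − x⟩ > 0 and −ln⟨u, r⟩ ≥ −ln⟨x, r⟩ − (1/(2β))·ln(1 − 2β·⟨g, u − x⟩). -/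
/-- Weighted AM-GM for `1` and `t`, in logarithmic form. -/
theorem mul_log_le_log_one_sub_add_mul {c t : ℝ} (hc0 : 0 ≤ c) (hc1 : c ≤ 1) (ht : 0 < t) :
    c * Real.log t ≤ Real.log (1 - c + c * t) := by
  have h := strictConcaveOn_log_Ioi.concaveOn.2 (Set.mem_Ioi.2 one_pos) (Set.mem_Ioi.2 ht)
    (sub_nonneg.2 hc1) hc0 (sub_add_cancel 1 c)
  simpa using h

/-- The linearization of `-log ⟨·, r⟩` at `x`, evaluated at `u`. -/
theorem sum_neg_div_mul_sub {ι : Type*} [Fintype ι] (r x u : ι → ℝ)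
    (hxr : ∑ i, x i * r i ≠ 0) :
    ∑ i, (-(r i) / ∑ j, x j * r j) * (u i - x i)
      = 1 - (∑ i, u i * r i) / ∑ i, x i * r i := by
  rw [← div_self hxr, ← sub_div, ← Finset.sum_sub_distrib, Finset.sum_div]
  refine Finset.sum_congr rfl fun i _ => ?_
  ring

/- STATEMENT 13: 2β-exp-concavity of f(x) = -ln⟨x, r⟩ on the simplex, with
   g = -r/⟨x, r⟩ the gradient of f at x. -/

theorem exp_concavity
    (N : ℕ)
    (r x u : Fin N → ℝ)
    (hr : ∀ i, 0 ≤ r i)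
    (hx : (∀ i, 0 ≤ x i) ∧ (∑ i, x i) = 1)
    (hu : (∀ i, 0 ≤ u i) ∧ (∑ i, u i) = 1)
    (hxr : 0 < ∑ i, x i * r i) (hur : 0 < ∑ i, u i * r i)
    (β : ℝ) (hβ0 : 0 < β) (hβ : β ≤ 1 / 2) :
    0 < 1 - 2 * β * ∑ i, (-(r i) / ∑ j, x j * r j) * (u i - x i) ∧
    -Real.log (∑ i, u i * r i)
      ≥ -Real.log (∑ i, x i * r i)
        - (1 / (2 * β))
            * Real.log (1 - 2 * β * ∑ i, (-(r i) / ∑ j, x j * r j) * (u i - x i)) := by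
  rw [sum_neg_div_mul_sub r x u hxr.ne']
  set a := ∑ i, x i * r i
  set b := ∑ i, u i * r i
  have ht : 0 < b / a := div_pos hur hxr
  have hlin : 1 - 2 * β * (1 - b / a) = 1 - 2 * β + 2 * β * (b / a) := by ring
  rw [hlin]
  have hc : 0 < 2 * β := by positivity
  refine ⟨add_pos_of_nonneg_of_pos (by linarith) (mul_pos hc ht), ?_⟩
  have hlog := mul_log_le_log_one_sub_add_mul hc.le (by linarith) ht
  rw [mul_comm, ← le_div_iff₀ hc, Real.log_div hur.ne' hxr.ne'] at hlog
  rw [one_div_mul_eq_div]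
  linarith
end

section
/- For every C > 0 there exists C' > 0 depending only on C such that the following holds. Let N, T be integers with T > N ≥ 2, let x_1, …, x_T ∈ Δ̄_N, let u ∈ Δ̄_N, let each r_t ∈ ℝ^N have nonnegative entries with r_t ≠ 0, set ∇_t = −r_t/⟨x_t, r_t⟩ and α_T(u) = min{1/2, min_{s∈[T]} 1/(8·|⟨∇_s, u − x_s⟩|)}, and set η = 1/(1024·N·(ln T)²). If a real number R satisfies R ≤ C·N·ln T/η + 16·N·ln T/α_T(u) − (1/(8·η·ln T))·Σ_{i=1}^N max_{t∈[T]} u_i/x_{t,i}, then R ≤ C'·N²·(ln T)³. -/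
/-- The gradient `-r / ⟨x, r⟩` of the logarithmic loss has inner product at most `S + 1` in absolute
value with `u - x` whenever `u ≤ S • x` coordinatewise. -/
lemma abs_sum_neg_div_mul_sub_le {ι : Type*} [Fintype ι] {x u r : ι → ℝ} {S : ℝ}
    (hx : ∀ i, 0 < x i) (hu : ∀ i, 0 ≤ u i) (hr : ∀ i, 0 ≤ r i) (hr0 : r ≠ 0)
    (hS : ∀ i, u i / x i ≤ S) :
    |∑ i, (-(r i) / ∑ j, x j * r j) * (u i - x i)| ≤ S + 1 := by
  obtain ⟨k, hk⟩ := Function.ne_iff.mp hr0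
  have hD : 0 < ∑ j, x j * r j :=
    Finset.sum_pos' (fun j _ => mul_nonneg (hx j).le (hr j))
      ⟨k, Finset.mem_univ k, mul_pos (hx k) (lt_of_le_of_ne (hr k) (Ne.symm hk))⟩
  have hsum : ∑ i, (-(r i) / ∑ j, x j * r j) * (u i - x i)
      = 1 - (∑ i, u i * r i) / ∑ j, x j * r j := by
    calc ∑ i, (-(r i) / ∑ j, x j * r j) * (u i - x i)
        = (∑ i, (x i * r i - u i * r i)) / ∑ j, x j * r j := by
          rw [Finset.sum_div]
          exact Finset.sum_congr rfl fun i _ => by ring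
      _ = 1 - (∑ i, u i * r i) / ∑ j, x j * r j := by
          rw [Finset.sum_sub_distrib, sub_div, div_self hD.ne']
  have hq0 : 0 ≤ (∑ i, u i * r i) / ∑ j, x j * r j :=
    div_nonneg (Finset.sum_nonneg fun i _ => mul_nonneg (hu i) (hr i)) hD.le
  have hqS : (∑ i, u i * r i) / ∑ j, x j * r j ≤ S := by
    rw [div_le_iff₀ hD, Finset.mul_sum]
    refine Finset.sum_le_sum fun i _ => ?_
    rw [← mul_assoc]
    exact mul_le_mul_of_nonneg_right ((div_le_iff₀ (hx i)).mp (hS i)) (hr i)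
  rw [hsum, abs_le]
  constructor <;> linarith

/-- A value of a nonnegative function on a finset is at most its supremum over the finset. -/
lemma le_biSup_finset_of_nonneg {α : Type*} {s : Finset α} {f : α → ℝ}
    (hf : ∀ a ∈ s, 0 ≤ f a) {a : α} (ha : a ∈ s) : f a ≤ ⨆ b ∈ s, f b := by
  have hbdd : BddAbove (Set.range fun b => ⨆ _ : b ∈ s, f b) := by
    refine ⟨∑ c ∈ s, f c, ?_⟩
    rintro _ ⟨b, rfl⟩
    exact Real.iSup_le (fun hb => Finset.single_le_sum hf hb) (Finset.sum_nonneg hf)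
  calc f a = ⨆ _ : a ∈ s, f a := (ciSup_pos (f := fun _ : a ∈ s => f a) ha).symm
    _ ≤ _ := le_ciSup hbdd a

/-- The reciprocal of `min (1/2) (min_s 1 / (8 g s))` is at most `10 + 8 S` when `g ≤ S + 1`. -/
lemma inv_min_half_inf'_le {α : Type*} {s : Finset α} (hs : s.Nonempty) {g : α → ℝ} {S : ℝ}
    (hS : 0 ≤ S) (hg : ∀ a ∈ s, g a ≤ S + 1) :
    (min (1 / 2 : ℝ) (s.inf' hs fun a => 1 / (8 * g a)))⁻¹ ≤ 10 + 8 * S := by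
  obtain ⟨a, ha, hmin⟩ := Finset.exists_mem_eq_inf' hs fun a => 1 / (8 * g a)
  rcases min_choice (1 / 2 : ℝ) (s.inf' hs fun a => 1 / (8 * g a)) with h | h
  · rw [h]
    norm_num
    linarith
  · rw [h, hmin, one_div, inv_inv]
    linarith [hg a ha]

/- STATEMENT 18: the cancellation computation after Theorem 1 of the paper, with
   η = 1/(1024·N·(ln T)²) and α_T(u) = min{1/2, min_{s∈[T]} 1/(8|⟨∇_s, u - x_s⟩|)}. -/

theorem cancellation_computation :
    ∀ C : ℝ, 0 < C → ∃ C' : ℝ, 0 < C' ∧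
      ∀ (N T : ℕ) (_hN : 2 ≤ N) (hT : N < T)
        (x : ℕ → Fin N → ℝ) (u : Fin N → ℝ) (r : ℕ → Fin N → ℝ),
        (∀ t ∈ Finset.Icc 1 T,
            (∀ i, 0 ≤ x t i) ∧ (∑ i, x t i) = 1 ∧ ∀ i, 1 / ((N : ℝ) * T) ≤ x t i) →
        ((∀ i, 0 ≤ u i) ∧ (∑ i, u i) = 1 ∧ ∀ i, 1 / ((N : ℝ) * T) ≤ u i) →
        (∀ t ∈ Finset.Icc 1 T, (∀ i, 0 ≤ r t i) ∧ r t ≠ 0) →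
        ∀ R : ℝ,
          R ≤ C * N * Real.log T / (1 / (1024 * N * (Real.log T) ^ 2))
              + 16 * N * Real.log T /
                  min (1 / 2 : ℝ)
                    ((Finset.Icc 1 T).inf' ⟨1, Finset.mem_Icc.mpr ⟨le_rfl, by omega⟩⟩
                      fun s => 1 /
                        (8 * |∑ i, (-(r s i) / ∑ j, x s j * r s j) * (u i - x s i)|))
              - (1 / (8 * (1 / (1024 * N * (Real.log T) ^ 2)) * Real.log T))
                  * ∑ i, ⨆ t ∈ Finset.Icc 1 T, u i / x t i →
          R ≤ C' * N ^ 2 * (Real.log T) ^ 3 := by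
  intro C hC
  refine ⟨1024 * C + 160, by positivity, ?_⟩
  intro N T hN hT x u r hx hu hr R hR
  have hT0 : (0 : ℝ) < T := by exact_mod_cast (by omega : 0 < T)
  have hN1 : (1 : ℝ) ≤ N := by exact_mod_cast (by omega : 1 ≤ N)
  have hN0 : (0 : ℝ) < N := by linarith
  have hL : 1 ≤ Real.log T := by
    rw [Real.le_log_iff_exp_le hT0]
    have h3 : (3 : ℝ) ≤ T := by exact_mod_cast (by omega : 3 ≤ T)
    linarith [Real.exp_one_lt_d9]
  have hxpos : ∀ t ∈ Finset.Icc 1 T, ∀ i, 0 < x t i := fun t ht i =>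
    lt_of_lt_of_le (by positivity) ((hx t ht).2.2 i)
  have hnonneg : ∀ i, ∀ t ∈ Finset.Icc 1 T, 0 ≤ u i / x t i := fun i t ht =>
    div_nonneg (hu.1 i) (hxpos t ht i).le
  have hsup0 : ∀ i, 0 ≤ ⨆ t ∈ Finset.Icc 1 T, u i / x t i := fun i =>
    Real.iSup_nonneg fun t => Real.iSup_nonneg fun ht => hnonneg i t ht
  have hratio : ∀ t ∈ Finset.Icc 1 T, ∀ i,
      u i / x t i ≤ ∑ i, ⨆ t ∈ Finset.Icc 1 T, u i / x t i := fun t ht i =>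
    (le_biSup_finset_of_nonneg (hnonneg i) ht).trans
      (Finset.single_le_sum (f := fun i => ⨆ t ∈ Finset.Icc 1 T, u i / x t i)
        (fun i _ => hsup0 i) (Finset.mem_univ i))
  have hinv := inv_min_half_inf'_le (s := Finset.Icc 1 T)
    ⟨1, Finset.mem_Icc.mpr ⟨le_rfl, by omega⟩⟩ (Finset.sum_nonneg fun i _ => hsup0 i)
    (fun s hs => abs_sum_neg_div_mul_sub_le (hxpos s hs) hu.1 (hr s hs).1 (hr s hs).2
      (hratio s hs))
  rw [div_eq_mul_inv (16 * (N : ℝ) * Real.log T)] at hR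
  generalize (∑ i, ⨆ t ∈ Finset.Icc 1 T, u i / x t i) = S at hR hinv
  generalize (min (1 / 2 : ℝ) _)⁻¹ = A at hR hinv
  generalize Real.log T = L at hR hL
  have hL0 : 0 < L := by linarith
  have hmain : C * N * L / (1 / (1024 * N * L ^ 2)) = 1024 * C * (N ^ 2 * L ^ 3) := by
    field_simp
  have hcoef : 1 / (8 * (1 / (1024 * N * L ^ 2)) * L) = 128 * (N * L) := by
    field_simp
    norm_num
  rw [hmain, hcoef] at hR
  have habsorb : 16 * N * L * A ≤ 16 * N * L * (10 + 8 * S) :=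
    mul_le_mul_of_nonneg_left hinv (by positivity)
  have hlow : N * L ≤ (N : ℝ) ^ 2 * L ^ 3 :=
    mul_le_mul (le_self_pow₀ hN1 two_ne_zero) (le_self_pow₀ hL three_ne_zero) hL0.le (by positivity)
  linarith
end
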